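/- (Estimate (3.7) in the proof of Proposition 3.8.) Let (Ω_k) be a sequence of nonempty bounded open convex subsets of ℝ² with |Ω_k| = 1 for all k and diam(Ω_k) → +∞. Then limsup_{k→∞} λ₁(Ω_k)·μ₁(Ω_k) ≤ π⁴; in particular, since π⁴ < π²·(j'₁₁)²·j₀₁² = F(𝔻), no sequence of unit-area convex sets with diameters tending to infinity can be a maximizing sequence for F(Ω) := |Ω|²·λ₁(Ω)·μ₁(Ω). -/

import Mathlib

open MeasureTheory Filter Set Real RealInnerProductSpace

noncomputable section

abbrev E2 : Type := EuclideanSpace ℝ (Fin 2)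

/-- First Dirichlet eigenvalue, variational characterization. -/
noncomputable def dEig1 (Ω : Set E2) : ℝ :=
  sInf { R : ℝ | ∃ u : E2 → ℝ, ContDiff ℝ (⊤ : ℕ∞) u ∧ HasCompactSupport u ∧
    tsupport u ⊆ Ω ∧ (∫ x, (u x)^2) ≠ 0 ∧
    R = (∫ x, ‖fderiv ℝ u x‖^2) / (∫ x, (u x)^2) }

/-- First nontrivial Neumann eigenvalue, variational characterization. -/
noncomputable def nEig1 (Ω : Set E2) : ℝ :=
  sInf { R : ℝ | ∃ u : E2 → ℝ, ContDiff ℝ (⊤ : ℕ∞) u ∧ (∫ x in Ω, u x) = 0 ∧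
    (∫ x in Ω, (u x)^2) ≠ 0 ∧
    R = (∫ x in Ω, ‖fderiv ℝ u x‖^2) / (∫ x in Ω, (u x)^2) }

/-- The open unit disc in the plane. -/
def unitDisc : Set E2 := Metric.ball 0 1

theorem mp_mk : MeasurePreserving (fun p : ℝ × ℝ => (!₂[p.1, p.2] : E2)) := by
  have h1 := (MeasureTheory.volume_preserving_finTwoArrow ℝ).symm
  have h2 := PiLp.volume_preserving_toLp (Fin 2)
  have := h2.comp h1
  exact this

theorem me_mk : MeasurableEmbedding (fun p : ℝ × ℝ => (!₂[p.1, p.2] : E2)) := by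
  have h1 := (MeasurableEquiv.finTwoArrow (α := ℝ)).symm.measurableEmbedding
  have h2 := (MeasurableEquiv.toLp 2 (Fin 2 → ℝ)).measurableEmbedding
  exact h2.comp h1

theorem int_E2 (f : E2 → ℝ) : ∫ x, f x = ∫ p : ℝ × ℝ, f !₂[p.1, p.2] :=
  (mp_mk.integral_comp me_mk f).symm

theorem setInt_E2 (f : E2 → ℝ) (s : Set E2) :
    ∫ x in s, f x = ∫ p in {p : ℝ × ℝ | (!₂[p.1, p.2] : E2) ∈ s}, f !₂[p.1, p.2] :=
  (mp_mk.setIntegral_preimage_emb me_mk f s).symm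

theorem eta_E2 (x : E2) : (!₂[x 0, x 1] : E2) = x := by
  ext i; fin_cases i <;> simp

theorem norm_sq_E2 (x : E2) : ‖x‖^2 = (x 0)^2 + (x 1)^2 := by
  simp [EuclideanSpace.norm_sq_eq]

/-- operator norm of a functional in a rotated frame -/
theorem opnorm_sq (ℓ : E2 →L[ℝ] ℝ) (c s : ℝ) (h : c^2 + s^2 = 1) :
    ‖ℓ‖^2 = (ℓ !₂[c, s])^2 + (ℓ !₂[-s, c])^2 := by
  obtain ⟨v, rfl⟩ := (InnerProductSpace.toDual ℝ E2).surjective ℓ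
  simp only [LinearIsometryEquiv.norm_map, InnerProductSpace.toDual_apply_apply, norm_sq_E2]
  simp [PiLp.inner_apply, Fin.sum_univ_two]
  linear_combination (-(v 0)^2 - (v 1)^2) * h

theorem opnorm_sq' (ℓ : E2 →L[ℝ] ℝ) :
    ‖ℓ‖^2 = (ℓ !₂[1, 0])^2 + (ℓ !₂[0, 1])^2 := by
  simpa using opnorm_sq ℓ 1 0 (by norm_num)

theorem dEig1_nonneg (Ω : Set E2) : 0 ≤ dEig1 Ω := by
  apply Real.sInf_nonneg
  rintro R ⟨u, -, -, -, -, rfl⟩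
  positivity

theorem nEig1_nonneg (Ω : Set E2) : 0 ≤ nEig1 Ω := by
  apply Real.sInf_nonneg
  rintro R ⟨u, -, -, -, rfl⟩
  positivity

theorem dEig1_le {Ω : Set E2} {u : E2 → ℝ} (h1 : ContDiff ℝ (⊤ : ℕ∞) u) (h2 : HasCompactSupport u)
    (h3 : tsupport u ⊆ Ω) (h4 : (∫ x, (u x)^2) ≠ 0) :
    dEig1 Ω ≤ (∫ x, ‖fderiv ℝ u x‖^2) / (∫ x, (u x)^2) := by
  apply csInf_le
  · refine ⟨0, ?_⟩
    rintro R ⟨u, -, -, -, -, rfl⟩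
    positivity
  · exact ⟨u, h1, h2, h3, h4, rfl⟩

theorem nEig1_le {Ω : Set E2} {u : E2 → ℝ} (h1 : ContDiff ℝ (⊤ : ℕ∞) u)
    (h3 : (∫ x in Ω, u x) = 0) (h4 : (∫ x in Ω, (u x)^2) ≠ 0) :
    nEig1 Ω ≤ (∫ x in Ω, ‖fderiv ℝ u x‖^2) / (∫ x in Ω, (u x)^2) := by
  apply csInf_le
  · refine ⟨0, ?_⟩
    rintro R ⟨u, -, -, -, rfl⟩
    positivity
  · exact ⟨u, h1, h3, h4, rfl⟩

/-- norm of derivative after composition with isometry -/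
theorem fderiv_comp_iso (T : E2 ≃ₗᵢ[ℝ] E2) {u : E2 → ℝ} (x : E2) :
    ‖fderiv ℝ (fun y => u (T y)) x‖ = ‖fderiv ℝ u (T x)‖ := by
  have : fderiv ℝ (fun y => u (T y)) x = (fderiv ℝ u (T x)).comp (T.toContinuousLinearEquiv : E2 →L[ℝ] E2) := by
    exact T.toContinuousLinearEquiv.comp_right_fderiv (f := u) (x := x)
  rw [this]
  exact ContinuousLinearMap.opNorm_comp_linearIsometryEquiv _ T

theorem int_comp_iso (T : E2 ≃ₗᵢ[ℝ] E2) (f : E2 → ℝ) (s : Set E2) :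
    ∫ x in T ⁻¹' s, f (T x) = ∫ x in s, f x :=
  T.measurePreserving.setIntegral_preimage_emb T.toHomeomorph.measurableEmbedding f s

theorem int_comp_iso' (T : E2 ≃ₗᵢ[ℝ] E2) (f : E2 → ℝ) :
    ∫ x, f (T x) = ∫ x, f x :=
  T.measurePreserving.integral_comp T.toHomeomorph.measurableEmbedding f

theorem nEig1_iso_set (T : E2 ≃ₗᵢ[ℝ] E2) (Ω : Set E2) (R : ℝ)
  (h : ∃ u : E2 → ℝ, ContDiff ℝ (⊤ : ℕ∞) u ∧ (∫ x in Ω, u x) = 0 ∧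
    (∫ x in Ω, (u x)^2) ≠ 0 ∧
    R = (∫ x in Ω, ‖fderiv ℝ u x‖^2) / (∫ x in Ω, (u x)^2)) :
   ∃ u : E2 → ℝ, ContDiff ℝ (⊤ : ℕ∞) u ∧ (∫ x in T ⁻¹' Ω, u x) = 0 ∧
    (∫ x in T ⁻¹' Ω, (u x)^2) ≠ 0 ∧
    R = (∫ x in T ⁻¹' Ω, ‖fderiv ℝ u x‖^2) / (∫ x in T ⁻¹' Ω, (u x)^2) := by
  obtain ⟨u, h1, h2, h3, rfl⟩ := h
  refine ⟨fun y => u (T y), h1.comp T.contDiff, ?_, ?_, ?_⟩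
  · rwa [int_comp_iso T]
  · rwa [int_comp_iso T (fun x => (u x)^2)]
  · simp only [fderiv_comp_iso]
    rw [int_comp_iso T (fun x => (u x)^2), int_comp_iso T (fun x => ‖fderiv ℝ u x‖^2)]

theorem nEig1_iso (T : E2 ≃ₗᵢ[ℝ] E2) (Ω : Set E2) : nEig1 (T ⁻¹' Ω) = nEig1 Ω := by
  unfold nEig1
  congr 1
  ext R
  refine ⟨fun h => ?_, nEig1_iso_set T Ω R⟩
  have := nEig1_iso_set T.symm _ R h
  have e : T.symm ⁻¹' (T ⁻¹' Ω) = Ω := by ext x; simp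
  rw [e] at this
  exact this

theorem dEig1_iso_set (T : E2 ≃ₗᵢ[ℝ] E2) (Ω : Set E2) (R : ℝ)
  (h : ∃ u : E2 → ℝ, ContDiff ℝ (⊤ : ℕ∞) u ∧ HasCompactSupport u ∧
    tsupport u ⊆ Ω ∧ (∫ x, (u x)^2) ≠ 0 ∧
    R = (∫ x, ‖fderiv ℝ u x‖^2) / (∫ x, (u x)^2)) :
   ∃ u : E2 → ℝ, ContDiff ℝ (⊤ : ℕ∞) u ∧ HasCompactSupport u ∧
    tsupport u ⊆ T ⁻¹' Ω ∧ (∫ x, (u x)^2) ≠ 0 ∧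
    R = (∫ x, ‖fderiv ℝ u x‖^2) / (∫ x, (u x)^2) := by
  obtain ⟨u, h1, h2, h3, h4, rfl⟩ := h
  refine ⟨fun y => u (T y), h1.comp T.contDiff, ?_, ?_, ?_, ?_⟩
  · exact h2.comp_homeomorph T.toHomeomorph
  · exact (tsupport_comp_subset_preimage u T.continuous).trans (preimage_mono h3)
  · rwa [int_comp_iso' T (fun x => (u x)^2)]
  · simp only [fderiv_comp_iso]
    rw [int_comp_iso' T (fun x => (u x)^2), int_comp_iso' T (fun x => ‖fderiv ℝ u x‖^2)]

theorem dEig1_iso (T : E2 ≃ₗᵢ[ℝ] E2) (Ω : Set E2) : dEig1 (T ⁻¹' Ω) = dEig1 Ω := by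
  unfold dEig1
  congr 1
  ext R
  refine ⟨fun h => ?_, dEig1_iso_set T Ω R⟩
  have := dEig1_iso_set T.symm _ R h
  have e : T.symm ⁻¹' (T ⁻¹' Ω) = Ω := by ext x; simp
  rw [e] at this
  exact this

/-- integrability of continuous functions on bounded sets -/
theorem intOn_bdd {f : E2 → ℝ} (hf : Continuous f) {s : Set E2} (hs : Bornology.IsBounded s) :
    IntegrableOn f s :=
  (hf.continuousOn.integrableOn_compact hs.isCompact_closure).mono_set subset_closure


theorem hcs_sq {F : Type*} [NormedAddCommGroup F] {u : E2 → F} (h : HasCompactSupport u) :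
    HasCompactSupport (fun x => ‖u x‖^2) := by
  apply h.mono
  intro x hx hn
  apply hx
  simp only [hn]
  simp

theorem hcs_sq' {u : E2 → ℝ} (h : HasCompactSupport u) :
    HasCompactSupport (fun x => (u x)^2) := by
  simpa using hcs_sq h

theorem int_fderiv_zero {W : E2 → ℝ} (hW : ContDiff ℝ 1 W) (hc : HasCompactSupport W) (v : E2) :
    ∫ x, fderiv ℝ W x v = 0 := by
  have hc' : Continuous fun x => fderiv ℝ W x v :=
    (hW.continuous_fderiv (by norm_num)).clm_apply continuous_const
  have hs' : HasCompactSupport fun x => fderiv ℝ W x v := by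
    exact (hc.fderiv_apply (𝕜 := ℝ) v)
  have := integral_mul_fderiv_eq_neg_fderiv_mul_of_integrable (𝕜 := ℝ) (μ := (volume : Measure E2))
    (f := W) (g := fun _ => (1:ℝ)) (v := v) (by simpa using hc'.integrable_of_hasCompactSupport hs')
    (by simp) (by simpa using hW.continuous.integrable_of_hasCompactSupport hc)
    (fun x _ => hW.differentiable (by norm_num) x) (fun x _ => differentiableAt_const _)
  simpa using this

def phiD (s : ℝ) : ℝ := 1 - 1.3 * s + 0.31 * s^2
theorem phiD_pos {s : ℝ} (h0 : 0 ≤ s) (h : s < 1) : 0 < phiD s := by unfold phiD; nlinarith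

def psiD (s : ℝ) : ℝ := (-2.6 + 1.24 * s) / phiD s

def WD (u : E2 → ℝ) (i : Fin 2) (x : E2) : ℝ := (u x)^2 * (psiD (‖x‖^2) * x i)

theorem WD_contDiffAt {u : E2 → ℝ} (h1 : ContDiff ℝ (⊤ : ℕ∞) u) (i : Fin 2) {x : E2}
    (hx : ‖x‖ < 1) : ContDiffAt ℝ 1 (WD u i) x := by
  have hs : ‖x‖^2 < 1 := by nlinarith [norm_nonneg x]
  have hu : ContDiffAt ℝ 1 u x := (h1.of_le (by exact_mod_cast le_top)).contDiffAt
  have hp := (phiD_pos (sq_nonneg ‖x‖) hs).ne'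
  have hn : ContDiffAt ℝ 1 (fun x : E2 => ‖x‖^2) x := (contDiff_norm_sq ℝ).contDiffAt
  have hi : ContDiffAt ℝ 1 (fun x : E2 => x i) x := by fun_prop
  unfold WD psiD
  unfold phiD at *
  fun_prop (disch := assumption)

theorem WD_zero {u : E2 → ℝ} (i : Fin 2) {x : E2}
    (hx : x ∉ tsupport u) : WD u i =ᶠ[nhds x] fun _ => 0 := by
  filter_upwards [notMem_tsupport_iff_eventuallyEq.1 hx] with y hy
  simp [WD, hy]

theorem WD_contDiff {u : E2 → ℝ} (h1 : ContDiff ℝ (⊤ : ℕ∞) u) (h3 : tsupport u ⊆ unitDisc)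
    (i : Fin 2) : ContDiff ℝ 1 (WD u i) := by
  rw [contDiff_iff_contDiffAt]
  intro x
  by_cases hx : x ∈ tsupport u
  · exact WD_contDiffAt h1 i (by simpa [unitDisc] using h3 hx)
  · exact contDiffAt_const.congr_of_eventuallyEq (WD_zero i hx)

theorem WD_fderiv {u : E2 → ℝ} (h1 : ContDiff ℝ (⊤ : ℕ∞) u) (i : Fin 2) {x : E2}
    (hx : ‖x‖ < 1) : fderiv ℝ (WD u i) x (EuclideanSpace.single i 1) =
      2 * u x * fderiv ℝ u x (EuclideanSpace.single i 1) * (psiD (‖x‖^2) * x i) +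
      (u x)^2 * (psiD (‖x‖^2) + x i * ((2.48 * x i * phiD (‖x‖^2) -
        (-2.6 + 1.24 * ‖x‖^2)^2 * x i) / (phiD (‖x‖^2))^2)) := by
  have hs : ‖x‖^2 < 1 := by nlinarith [norm_nonneg x]
  have hp := (phiD_pos (sq_nonneg ‖x‖) hs).ne'
  have hl := ((WD_contDiffAt h1 i hx).differentiableAt (by norm_num)).hasFDerivAt.hasLineDerivAt
    (EuclideanSpace.single i 1)
  have hu := ((h1.contDiffAt (x := x)).differentiableAt (by simp)).hasFDerivAt.hasLineDerivAt
    (EuclideanSpace.single i 1)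
  unfold HasLineDerivAt at hl hu
  have hn : ∀ t : ℝ, ‖x + t • EuclideanSpace.single i (1:ℝ)‖^2 = ‖x‖^2 + 2 * t * x i + t^2 := by
    intro t
    rw [norm_sq_E2, norm_sq_E2]
    fin_cases i <;> simp <;> ring
  have hi : ∀ t : ℝ, (x + t • EuclideanSpace.single i (1:ℝ)) i = x i + t := by
    intro t; simp
  simp only [WD, hn, hi] at hl
  have hd1 : HasDerivAt (fun t : ℝ => ‖x‖^2 + 2 * t * x i + t^2) (2 * x i) 0 := by
    have := ((((hasDerivAt_id' (0:ℝ)).const_mul 2).mul_const (x i)).const_add (‖x‖^2)).fun_add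
      ((hasDerivAt_id' (0:ℝ)).fun_pow 2)
    exact this.congr_deriv (by simp)
  have hphi : HasDerivAt (fun t : ℝ => phiD (‖x‖^2 + 2 * t * x i + t^2))
     ((-2.6 + 1.24 * ‖x‖^2) * x i) 0 := by
    have := ((hd1.const_mul (1.3:ℝ)).const_sub 1).fun_add ((hd1.fun_pow 2).const_mul (0.31:ℝ))
    unfold phiD
    exact this.congr_deriv (by simp; ring)
  have hnum : HasDerivAt (fun t : ℝ => -2.6 + 1.24 * (‖x‖^2 + 2 * t * x i + t^2))
     (2.48 * x i) 0 := by
    have := (hd1.const_mul (1.24:ℝ)).const_add (-2.6)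
    exact this.congr_deriv (by ring)
  have hpsi : HasDerivAt (fun t : ℝ => psiD (‖x‖^2 + 2 * t * x i + t^2))
     ((2.48 * x i * phiD (‖x‖^2) -
        (-2.6 + 1.24 * ‖x‖^2)^2 * x i) / (phiD (‖x‖^2))^2) 0 := by
    have := hnum.fun_div hphi (by simpa using hp)
    unfold psiD
    refine this.congr_deriv ?_
    congr 1 <;> simp <;> ring
  have hx1 : HasDerivAt (fun t : ℝ => x i + t) 1 0 := (hasDerivAt_id (0:ℝ)).const_add _
  have := (hu.fun_pow 2).fun_mul (hpsi.fun_mul hx1)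
  have e := hl.unique this
  rw [e]
  simp only [zero_smul, add_zero, mul_zero, zero_mul, ne_eq, OfNat.ofNat_ne_zero, not_false_eq_true, zero_pow]
  push_cast
  ring

theorem disc_dir_aux {u : E2 → ℝ} (h1 : ContDiff ℝ (⊤ : ℕ∞) u)
    (h3 : tsupport u ⊆ unitDisc) (x : E2) :
    fderiv ℝ (WD u 0) x (EuclideanSpace.single 0 1) + fderiv ℝ (WD u 1) x (EuclideanSpace.single 1 1)
      ≤ ‖fderiv ℝ u x‖^2 - 5 * (u x)^2 := by
  by_cases hx : x ∈ tsupport u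
  · have hx1 : ‖x‖ < 1 := by simpa [unitDisc] using h3 hx
    have hs : ‖x‖^2 < 1 := by nlinarith [norm_nonneg x]
    have hp := (phiD_pos (sq_nonneg ‖x‖) hs)
    rw [WD_fderiv h1 0 hx1, WD_fderiv h1 1 hx1, opnorm_sq']
    have e0 : (!₂[1,0] : E2) = EuclideanSpace.single 0 1 := by ext i; fin_cases i <;> simp
    have e1 : (!₂[0,1] : E2) = EuclideanSpace.single 1 1 := by ext i; fin_cases i <;> simp
    rw [e0, e1]
    set a := fderiv ℝ u x (EuclideanSpace.single 0 1)
    set b := fderiv ℝ u x (EuclideanSpace.single 1 1)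
    have hss : ‖x‖^2 = (x 0)^2 + (x 1)^2 := norm_sq_E2 x
    set s := ‖x‖^2
    have hkey : 2 * psiD s + 2.48 * s / phiD s ≤ -5 := by
      unfold psiD
      rw [mul_div_assoc', ← add_div, div_le_iff₀ hp]
      have : 0 ≤ s := sq_nonneg _
      unfold phiD; nlinarith
    have q : ∀ y : ℝ, y * ((2.48 * y * phiD s - (-2.6 + 1.24 * s)^2 * y) / (phiD s)^2)
       = y^2 * (2.48 / phiD s - (psiD s)^2) := by
      intro y; unfold psiD; field_simp
    rw [q, q]
    have : 2.48 * s / phiD s = s * (2.48 / phiD s) := by ring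
    rw [this] at hkey
    set P := psiD s
    set K := 2.48 / phiD s
    have := mul_le_mul_of_nonneg_left hkey (sq_nonneg (u x))
    rw [hss] at this
    nlinarith [sq_nonneg (a - u x * P * x 0), sq_nonneg (b - u x * P * x 1)]
  · have hu : u x = 0 := image_eq_zero_of_notMem_tsupport hx
    rw [(WD_zero 0 hx).fderiv_eq, (WD_zero 1 hx).fderiv_eq, hu]
    simp

theorem disc_dir {u : E2 → ℝ} (h1 : ContDiff ℝ (⊤ : ℕ∞) u) (h2 : HasCompactSupport u)
    (h3 : tsupport u ⊆ unitDisc) : 5 * ∫ x, (u x)^2 ≤ ∫ x, ‖fderiv ℝ u x‖^2 := by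
  have hcW : ∀ i, HasCompactSupport (WD u i) := by
    intro i
    apply HasCompactSupport.of_support_subset_isCompact h2
    intro x hx
    by_contra hn
    exact hx (WD_zero i hn).eq_of_nhds
  have hi : ∀ i, Integrable fun x => fderiv ℝ (WD u i) x (EuclideanSpace.single i 1) := fun i =>
    (((WD_contDiff h1 h3 i).continuous_fderiv (by norm_num)).clm_apply
      continuous_const).integrable_of_hasCompactSupport ((hcW i).fderiv_apply (𝕜 := ℝ) _)
  have hu : Integrable fun x => (u x)^2 := by
    apply Continuous.integrable_of_hasCompactSupport (h1.continuous.pow 2)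
    exact hcs_sq' h2
  have hdu : Integrable fun x => ‖fderiv ℝ u x‖^2 := by
    apply Continuous.integrable_of_hasCompactSupport ((h1.continuous_fderiv (by simp)).norm.pow 2)
    exact hcs_sq (h2.fderiv (𝕜 := ℝ))
  have := integral_mono ((hi 0).add (hi 1)) (hdu.sub (hu.const_mul 5)) (disc_dir_aux h1 h3)
  simp only [Pi.add_apply, Pi.sub_apply] at this
  rw [integral_add (hi 0) (hi 1), integral_sub hdu (hu.const_mul 5), int_fderiv_zero (WD_contDiff h1 h3 0) (hcW 0),
    int_fderiv_zero (WD_contDiff h1 h3 1) (hcW 1), integral_const_mul] at this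
  linarith

theorem dEig1_disc : 5 ≤ dEig1 unitDisc := by
  apply le_csInf
  · let b : ContDiffBump (0:E2) := ⟨1/4, 1/2, by norm_num, by norm_num⟩
    refine ⟨_, b, b.contDiff, b.hasCompactSupport, ?_, ?_, rfl⟩
    · rw [b.tsupport_eq]
      exact Metric.closedBall_subset_ball (by show (1/2:ℝ) < 1; norm_num)
    · apply ne_of_gt
      apply Continuous.integral_pos_of_hasCompactSupport_nonneg_nonzero (b.continuous.pow 2)
      · exact hcs_sq' b.hasCompactSupport
      · intro x; exact sq_nonneg _
      · show (b 0)^2 ≠ 0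
        rw [b.one_of_mem_closedBall (by simp; exact b.rIn_pos.le)]; norm_num
  · rintro R ⟨u, h1, h2, h3, h4, rfl⟩
    have : 0 < ∫ x, (u x)^2 := lt_of_le_of_ne (integral_nonneg fun x => sq_nonneg _) (Ne.symm h4)
    rw [le_div_iff₀ this]
    exact disc_dir h1 h2 h3


theorem cs_interval {g : ℝ → ℝ} (hg : Continuous g) {a b : ℝ} (hab : a ≤ b) :
    (∫ x in a..b, g x)^2 ≤ (b - a) * ∫ x in a..b, (g x)^2 := by
  rcases hab.eq_or_lt with rfl | hab
  · simp
  have hT : 0 < b - a := sub_pos.2 hab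
  set J := ∫ x in a..b, g x with hJ
  set Q := ∫ x in a..b, (g x)^2 with hQ
  have h : 0 ≤ ∫ x in a..b, (g x - J / (b - a))^2 :=
    intervalIntegral.integral_nonneg hab.le fun x _ => sq_nonneg _
  have e : ∫ x in a..b, (g x - J / (b - a))^2 = Q - 2 * (J / (b-a)) * J + (b - a) * (J / (b-a))^2 := by
    have : ∀ x, (g x - J / (b - a))^2 = (g x)^2 - 2 * (J / (b-a)) * g x + (J / (b-a))^2 := by
      intro x; ring
    simp only [this]
    rw [intervalIntegral.integral_add, intervalIntegral.integral_sub, intervalIntegral.integral_const_mul,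
      intervalIntegral.integral_const, smul_eq_mul]
    all_goals apply Continuous.intervalIntegrable; fun_prop
  rw [e] at h
  have : Q - 2 * (J / (b-a)) * J + (b - a) * (J / (b-a))^2 = Q - J^2 / (b - a) := by
    field_simp; ring
  rw [this, sub_nonneg, div_le_iff₀ hT] at h
  linarith

theorem pt_bound {f f' : ℝ → ℝ} (hf : ∀ x, HasDerivAt f (f' x) x) (hc : Continuous f') {a b : ℝ}
    (hab : a ≤ b) : (f b - f a)^2 ≤ (b - a) * ∫ x in a..b, (f' x)^2 := by
  have := cs_interval hc hab
  rwa [intervalIntegral.integral_eq_sub_of_hasDerivAt (fun x _ => hf x) (hc.intervalIntegrable _ _)] at this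

theorem int_lin (c d K : ℝ) : ∫ x in c..d, (x - c) * K = (d - c)^2 / 2 * K := by
  rw [intervalIntegral.integral_mul_const, intervalIntegral.integral_comp_sub_right (fun x => x) c, integral_id]
  ring

theorem lemA {f f' : ℝ → ℝ} (hf : ∀ x, HasDerivAt f (f' x) x) (hc : Continuous f') {c d : ℝ}
    (hcd : c ≤ d) : ∫ x in c..d, (f x - f c)^2 ≤ (d - c)^2 / 2 * ∫ x in c..d, (f' x)^2 := by
  have hfc : Continuous f := continuous_iff_continuousAt.2 fun x => (hf x).continuousAt
  rw [← int_lin]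
  apply intervalIntegral.integral_mono_on hcd
  · apply Continuous.intervalIntegrable; fun_prop
  · apply Continuous.intervalIntegrable; fun_prop
  · intro x hx
    refine (pt_bound hf hc hx.1).trans ?_
    gcongr
    · linarith [hx.1]
    apply intervalIntegral.integral_mono_interval le_rfl hx.1 hx.2
    · filter_upwards with y using sq_nonneg _
    · apply Continuous.intervalIntegrable; fun_prop

theorem lemA' {f f' : ℝ → ℝ} (hf : ∀ x, HasDerivAt f (f' x) x) (hc : Continuous f') {c d : ℝ}
    (hcd : c ≤ d) : ∫ x in c..d, (f x - f d)^2 ≤ (d - c)^2 / 2 * ∫ x in c..d, (f' x)^2 := by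
  have h := lemA (f := fun x => f (-x)) (f' := fun x => - f' (-x)) (c := -d) (d := -c)
    (fun x => ((hf (-x)).comp x (hasDerivAt_neg x)).congr_deriv (by simp)) (by fun_prop) (by linarith)
  simp only [neg_neg, neg_sq] at h
  rw [intervalIntegral.integral_comp_neg (fun x => (f x - f d)^2),
    intervalIntegral.integral_comp_neg (fun x => (f' x)^2)] at h
  simp only [neg_neg] at h
  convert h using 2
  ring

theorem lemAc {f f' : ℝ → ℝ} (hf : ∀ x, HasDerivAt f (f' x) x) (hc : Continuous f') {c h k : ℝ}
    (hh : 0 ≤ h) (hk : f c = k) :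
    ∫ x in (c-h)..(c+h), (f x - k)^2 ≤ h^2 / 2 * ∫ x in (c-h)..(c+h), (f' x)^2 := by
  have hfc : Continuous f := continuous_iff_continuousAt.2 fun x => (hf x).continuousAt
  have h1 := lemA hf hc (c := c) (d := c + h) (by linarith)
  have h2 := lemA' hf hc (c := c - h) (d := c) (by linarith)
  rw [hk] at h1 h2
  rw [← intervalIntegral.integral_add_adjacent_intervals (b := c) (f := fun x => (f x - k)^2),
    ← intervalIntegral.integral_add_adjacent_intervals (b := c) (f := fun x => (f' x)^2)]
  · rw [add_sub_cancel_left] at h1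
    rw [sub_sub_cancel] at h2
    linarith
  all_goals apply Continuous.intervalIntegrable; fun_prop

theorem lem_radial {f f' : ℝ → ℝ} (hf : ∀ x, HasDerivAt f (f' x) x) (hc : Continuous f') :
    ∫ r in (0:ℝ)..1, r * (f r - f 1)^2 ≤ 1/2 * ∫ r in (0:ℝ)..1, r * (f' r)^2 := by
  have hfc : Continuous f := continuous_iff_continuousAt.2 fun x => (hf x).continuousAt
  set E := ∫ r in (0:ℝ)..1, r * (f' r)^2
  have e : 1/2 * E = ∫ r in (0:ℝ)..1, (1 - r) * E := by
    rw [intervalIntegral.integral_mul_const, intervalIntegral.integral_sub, integral_id]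
    · norm_num
    all_goals apply Continuous.intervalIntegrable; fun_prop
  rw [e]
  apply intervalIntegral.integral_mono_on zero_le_one
  · apply Continuous.intervalIntegrable; fun_prop
  · apply Continuous.intervalIntegrable; fun_prop
  · intro r hr
    have h1 := pt_bound hf hc hr.2
    calc r * (f r - f 1)^2 = r * (f 1 - f r)^2 := by ring
      _ ≤ r * ((1 - r) * ∫ x in r..1, (f' x)^2) := mul_le_mul_of_nonneg_left h1 hr.1
      _ = (1 - r) * ∫ x in r..1, r * (f' x)^2 := by
        rw [intervalIntegral.integral_const_mul]; ring
      _ ≤ (1 - r) * ∫ x in r..1, x * (f' x)^2 := by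
        apply mul_le_mul_of_nonneg_left _ (by linarith [hr.2])
        apply intervalIntegral.integral_mono_on hr.2
        · apply Continuous.intervalIntegrable; fun_prop
        · apply Continuous.intervalIntegrable; fun_prop
        · intro x hx; exact mul_le_mul_of_nonneg_right hx.1 (sq_nonneg _)
      _ ≤ (1 - r) * E := by
        apply mul_le_mul_of_nonneg_left _ (by linarith [hr.2])
        apply intervalIntegral.integral_mono_interval hr.1 hr.2 le_rfl
        · filter_upwards [ae_restrict_mem measurableSet_Ioc] with y hy using mul_nonneg hy.1.le (sq_nonneg _)
        · apply Continuous.intervalIntegrable; fun_prop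

theorem lem_two {p q : ℝ → ℝ} (hp : Continuous p) (hq : Continuous q) {a b : ℝ} (hab : a < b) (k : ℝ) :
    ∫ x in a..b, (p x - (∫ y in a..b, q y) / (b - a))^2 ≤
      (∫ x in a..b, (p x - k)^2) + ∫ x in a..b, (p x - q x)^2 := by
  have hT : 0 < b - a := sub_pos.2 hab
  have h := cs_interval (g := fun x => p x - q x) (by fun_prop) hab.le
  have e : ∀ k, ∫ x in a..b, (p x - k)^2 = (∫ x in a..b, (p x)^2) - 2 * k * (∫ x in a..b, p x) + (b - a) * k^2 := by
    intro k
    have : ∀ x, (p x - k)^2 = (p x)^2 - 2 * k * p x + k^2 := by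
      intro x; ring
    simp only [this]
    rw [intervalIntegral.integral_add, intervalIntegral.integral_sub, intervalIntegral.integral_const_mul,
      intervalIntegral.integral_const, smul_eq_mul]
    all_goals apply Continuous.intervalIntegrable; fun_prop
  rw [e, e]
  rw [intervalIntegral.integral_sub (hp.intervalIntegrable _ _) (hq.intervalIntegrable _ _)] at h
  set D := ∫ x in a..b, (p x - q x)^2
  set Sp := ∫ x in a..b, p x
  set Sq := ∫ x in a..b, q x
  have h' : (Sp - Sq)^2 / (b-a) ≤ D := by rw [div_le_iff₀ hT]; linarith
  have h2 : 0 ≤ ((b-a) * k - Sp)^2 / (b-a) := by positivity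
  have e2 : ((b-a) * k - Sp)^2 / (b-a) = (b-a)*k^2 - 2*k*Sp + Sp^2/(b-a) := by field_simp; ring
  have e3 : (Sp - Sq)^2 / (b-a) = Sp^2/(b-a) - 2 * (Sq/(b-a)) * Sp + (b-a) * (Sq/(b-a))^2 := by field_simp; ring
  linarith


theorem cont_mk : Continuous (fun p : ℝ × ℝ => (!₂[p.1, p.2] : E2)) := by
  fun_prop

theorem hasDerivAt_mk {f g : ℝ → ℝ} {f' g' t : ℝ} (hf : HasDerivAt f f' t) (hg : HasDerivAt g g' t) :
    HasDerivAt (fun t => (!₂[f t, g t] : E2)) !₂[f', g'] t := by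
  have e : ∀ a b : ℝ, (!₂[a, b] : E2) = a • !₂[1, 0] + b • !₂[0, 1] := by
    intro a b; ext i; fin_cases i <;> simp
  simp only [e (f _) (g _)]
  rw [e f' g']
  exact (hf.smul_const _).add (hg.smul_const _)

theorem mem_disc (x y : ℝ) : (!₂[x, y] : E2) ∈ unitDisc ↔ x^2 + y^2 < 1 := by
  have := norm_sq_E2 !₂[x,y]
  simp only [PiLp.toLp_apply, Matrix.cons_val_zero, Matrix.cons_val_one] at this
  simp only [unitDisc, mem_ball_zero_iff]
  rw [← this]
  constructor
  · intro h; nlinarith [norm_nonneg (!₂[x,y] : E2)]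
  · intro h; nlinarith [norm_nonneg (!₂[x,y] : E2)]

theorem meas_disc : MeasurableSet {p : ℝ × ℝ | p.1^2 + p.2^2 < 1} :=
  (isOpen_lt (by fun_prop) (by fun_prop)).measurableSet

theorem int_disc (G : E2 → ℝ) :
    ∫ x in unitDisc, G x = ∫ p in {p : ℝ × ℝ | p.1^2 + p.2^2 < 1}, G !₂[p.1, p.2] := by
  rw [setInt_E2]
  simp only [mem_disc]

theorem bdd_disc2 : {p : ℝ × ℝ | p.1^2 + p.2^2 < 1} ⊆ Icc (-1) 1 ×ˢ Icc (-1) 1 := by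
  rintro ⟨x, y⟩ h
  simp only [mem_ofPred_eq] at h
  refine ⟨⟨?_, ?_⟩, ⟨?_, ?_⟩⟩ <;> simp only <;> nlinarith [sq_nonneg x, sq_nonneg y]

theorem disc_slice {G : E2 → ℝ} (hG : Continuous G)
    (h : ∀ y, 0 ≤ 1 - y^2 → 0 ≤ ∫ x in (-√(1 - y^2))..√(1 - y^2), G !₂[x, y]) :
    0 ≤ ∫ x in unitDisc, G x := by
  rw [int_disc, ← integral_indicator meas_disc, Measure.volume_eq_prod, integral_prod_symm]
  · apply integral_nonneg
    intro y
    simp only [Pi.zero_apply]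
    by_cases hy : 0 ≤ 1 - y^2
    · have := h y hy
      rw [intervalIntegral.integral_of_le (by linarith [Real.sqrt_nonneg (1-y^2)]),
        integral_Ioc_eq_integral_Ioo, ← integral_indicator measurableSet_Ioo] at this
      refine this.trans_eq (integral_congr_ae (Eventually.of_forall fun x => ?_))
      simp only [indicator_apply, mem_ofPred_eq, mem_Ioo]
      refine if_congr ?_ rfl rfl
      rw [← abs_lt, Real.lt_sqrt (abs_nonneg x), sq_abs]
      constructor <;> intro h <;> linarith
    · apply integral_nonneg
      intro x
      simp only [indicator_apply, mem_ofPred_eq, Pi.zero_apply]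
      rw [if_neg]
      nlinarith [sq_nonneg x]
  · rw [integrable_indicator_iff meas_disc, ← Measure.volume_eq_prod]
    exact ((hG.comp cont_mk).continuousOn.integrableOn_compact (isCompact_Icc.prod isCompact_Icc)).mono_set bdd_disc2

theorem disc_polar {G : E2 → ℝ} (hG : Continuous G) :
    ∫ x in unitDisc, G x = ∫ r in (0:ℝ)..1, ∫ θ in (-π)..π, r * G !₂[r * cos θ, r * sin θ] := by
  rw [int_disc, ← integral_indicator meas_disc, ← integral_comp_polarCoord_symm]
  have e : ∀ p ∈ polarCoord.target, p.1 • indicator {p : ℝ × ℝ | p.1^2 + p.2^2 < 1}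
      (fun p => G !₂[p.1, p.2]) (polarCoord.symm p) =
      indicator (Ioo (0:ℝ) 1 ×ˢ Ioo (-π) π) (fun p => p.1 * G !₂[p.1 * cos p.2, p.1 * sin p.2]) p := by
    rintro ⟨r, θ⟩ hp
    simp only [polarCoord_target, mem_prod, mem_Ioi] at hp
    simp only [polarCoord_symm_apply, indicator_apply, mem_ofPred_eq, smul_eq_mul, mem_prod]
    have : (r * cos θ)^2 + (r * sin θ)^2 = r^2 := by
      have := sin_sq_add_cos_sq θ
      linear_combination r^2 * this
    rw [this]
    by_cases hr : r < 1
    · rw [if_pos (by nlinarith), if_pos ⟨⟨hp.1, hr⟩, hp.2⟩]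
    · rw [if_neg (by nlinarith), if_neg (fun h => hr h.1.2), mul_zero]
  rw [setIntegral_congr_fun polarCoord.open_target.measurableSet e]
  have hsub : (Ioo (0:ℝ) 1 ×ˢ Ioo (-π) π) ⊆ polarCoord.target := by
    rintro ⟨r, θ⟩ ⟨h1, h2⟩
    exact ⟨h1.1, h2⟩
  rw [setIntegral_indicator (measurableSet_Ioo.prod measurableSet_Ioo), inter_eq_self_of_subset_right hsub,
    Measure.volume_eq_prod, setIntegral_prod]
  · rw [intervalIntegral.integral_of_le zero_le_one, integral_Ioc_eq_integral_Ioo]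
    congr 1
    ext r
    rw [intervalIntegral.integral_of_le (by linarith [pi_pos]), integral_Ioc_eq_integral_Ioo]
  · rw [← Measure.volume_eq_prod]
    have hc : Continuous (fun p : ℝ × ℝ => p.1 * G !₂[p.1 * cos p.2, p.1 * sin p.2]) := by
      fun_prop
    exact (hc.continuousOn.integrableOn_compact (isCompact_Icc.prod isCompact_Icc)).mono_set
      (prod_mono Ioo_subset_Icc_self Ioo_subset_Icc_self)

theorem swap_int {H : ℝ → ℝ → ℝ} (hH : Continuous (Function.uncurry H)) (a b c d : ℝ) (hab : a ≤ b) (hcd : c ≤ d) :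
    ∫ x in a..b, ∫ y in c..d, H x y = ∫ y in c..d, ∫ x in a..b, H x y := by
  simp only [intervalIntegral.integral_of_le hab, intervalIntegral.integral_of_le hcd]
  apply integral_integral_swap
  rw [Measure.prod_restrict, ← Measure.volume_eq_prod]
  exact (hH.continuousOn.integrableOn_compact (isCompact_Icc.prod isCompact_Icc)).mono_set
      (prod_mono Ioc_subset_Icc_self Ioc_subset_Icc_self)

theorem cont_int {H : ℝ → ℝ → ℝ} (hH : Continuous (Function.uncurry H)) (c d : ℝ) :
    Continuous fun x => ∫ y in c..d, H x y :=
  intervalIntegral.continuous_parametric_intervalIntegral_of_continuous' hH c d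

/-- slice bound for functions odd in the first coordinate -/
theorem disc_odd {v : E2 → ℝ} (hv : ContDiff ℝ (⊤ : ℕ∞) v)
    (hodd : ∀ x y, v !₂[-x, y] = - v !₂[x, y]) :
    2 * ∫ x in unitDisc, (v x)^2 ≤ ∫ x in unitDisc, ‖fderiv ℝ v x‖^2 := by
  have hc := hv.continuous
  have hd : Continuous (fderiv ℝ v) := hv.continuous_fderiv (by simp)
  have key : 0 ≤ ∫ x in unitDisc, (‖fderiv ℝ v x‖^2 - 2 * (v x)^2) := by
    apply disc_slice (by fun_prop)
    intro y hy
    set l := √(1 - y^2) with hl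
    have hl0 : 0 ≤ l := Real.sqrt_nonneg _
    have hl1 : l^2 ≤ 1 := by rw [hl, Real.sq_sqrt hy]; nlinarith [sq_nonneg y]
    have hder : ∀ x, HasDerivAt (fun x => v !₂[x, y]) (fderiv ℝ v !₂[x, y] !₂[1, 0]) x := by
      intro x
      have h1 : HasDerivAt (fun x : ℝ => (!₂[x, y] : E2)) !₂[1, 0] x := by
        exact hasDerivAt_mk (hasDerivAt_id' x) (hasDerivAt_const x y)
      exact ((hv.differentiable (by simp) _).hasFDerivAt.comp_hasDerivAt x h1)
    have hm : Continuous fun x : ℝ => (!₂[x, y] : E2) := by fun_prop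
    have h0 : v !₂[0, y] = 0 := by
      have := hodd 0 y
      simp only [neg_zero] at this
      linarith
    have := lemAc hder (by fun_prop) (c := 0) (k := 0) hl0 h0
    simp only [zero_sub, zero_add, sub_zero] at this
    rw [intervalIntegral.integral_sub, intervalIntegral.integral_const_mul]
    · have h2 : ∫ x in (-l)..l, (fderiv ℝ v !₂[x, y] !₂[1, 0])^2 ≤ ∫ x in (-l)..l, ‖fderiv ℝ v !₂[x, y]‖^2 := by
        apply intervalIntegral.integral_mono_on (by linarith)
        · apply Continuous.intervalIntegrable; fun_prop
        · apply Continuous.intervalIntegrable; fun_prop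
        · intro x _
          rw [opnorm_sq']
          nlinarith [sq_nonneg (fderiv ℝ v !₂[x, y] !₂[0, 1])]
      have h3 : 0 ≤ ∫ x in (-l)..l, (fderiv ℝ v !₂[x, y] !₂[1, 0])^2 :=
        intervalIntegral.integral_nonneg (by linarith) fun x _ => sq_nonneg _
      nlinarith
    · apply Continuous.intervalIntegrable; fun_prop
    · apply Continuous.intervalIntegrable; fun_prop
  rw [integral_sub, integral_const_mul] at key
  · linarith
  · exact intOn_bdd (by fun_prop) Metric.isBounded_ball
  · exact intOn_bdd (by fun_prop) Metric.isBounded_ball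


theorem angular_bound {p p' : ℝ → ℝ} (hp : ∀ x, HasDerivAt p (p' x) x) (hc : Continuous p') {k : ℝ}
    (h1 : p (π/4) = k) (h2 : p (-(π/4)) = k) (h3 : p (3*π/4) = k) (h4 : p (-(3*π/4)) = k) :
    ∫ θ in (-π)..π, (p θ - k)^2 ≤ 1/2 * ∫ θ in (-π)..π, (p' θ)^2 := by
  have hfc : Continuous p := continuous_iff_continuousAt.2 fun x => (hp x).continuousAt
  have hpi := pi_pos
  have a1 := lemAc hp hc (h := π/4) (by positivity) h1
  have a2 := lemAc hp hc (h := π/4) (by positivity) h2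
  have a3 := lemAc hp hc (h := π/4) (by positivity) h3
  have a4 := lemAc hp hc (h := π/4) (by positivity) h4
  have split : ∀ f : ℝ → ℝ, Continuous f → ∫ θ in (-π)..π, f θ =
     (∫ θ in (-(3*π/4) - π/4)..(-(3*π/4) + π/4), f θ) + (∫ θ in (-(π/4) - π/4)..(-(π/4) + π/4), f θ)
     + (∫ θ in (π/4 - π/4)..(π/4 + π/4), f θ) + (∫ θ in (3*π/4 - π/4)..(3*π/4 + π/4), f θ) := by
    intro f hf
    have e1 : -(3*π/4) - π/4 = -π := by ring
    have e2 : -(3*π/4) + π/4 = -(π/4) - π/4 := by ring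
    have e3 : -(π/4) + π/4 = π/4 - π/4 := by ring
    have e4 : π/4 + π/4 = 3*π/4 - π/4 := by ring
    have e5 : 3*π/4 + π/4 = π := by ring
    rw [e1, e2, e3, e4, e5, intervalIntegral.integral_add_adjacent_intervals,
      intervalIntegral.integral_add_adjacent_intervals, intervalIntegral.integral_add_adjacent_intervals]
    all_goals exact hf.intervalIntegrable _ _
  rw [split _ (by fun_prop : Continuous fun θ => (p θ - k)^2), split _ (by fun_prop : Continuous fun θ => (p' θ)^2)]
  have hq : (π/4)^2/2 ≤ 1/2 := by nlinarith [pi_le_four]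
  have nn : ∀ a b : ℝ, a ≤ b → 0 ≤ ∫ θ in a..b, (p' θ)^2 := fun a b hab =>
    intervalIntegral.integral_nonneg hab fun x _ => sq_nonneg _
  have b1 := mul_le_mul_of_nonneg_right hq (nn (π/4 - π/4) (π/4 + π/4) (by linarith))
  have b2 := mul_le_mul_of_nonneg_right hq (nn (-(π/4) - π/4) (-(π/4) + π/4) (by linarith))
  have b3 := mul_le_mul_of_nonneg_right hq (nn (3*π/4 - π/4) (3*π/4 + π/4) (by linarith))
  have b4 := mul_le_mul_of_nonneg_right hq (nn (-(3*π/4) - π/4) (-(3*π/4) + π/4) (by linarith))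
  linarith

theorem disc_even {u : E2 → ℝ} (hv : ContDiff ℝ (⊤ : ℕ∞) u)
    (he1 : ∀ x y, u !₂[-x, y] = u !₂[x, y]) (he2 : ∀ x y, u !₂[x, -y] = u !₂[x, y]) :
    ∃ c : ℝ, 2 * ∫ x in unitDisc, (u x - c)^2 ≤ ∫ x in unitDisc, ‖fderiv ℝ u x‖^2 := by
  have hc := hv.continuous
  have hd : Continuous (fderiv ℝ u) := hv.continuous_fderiv (by simp)
  have hpi := pi_pos
  set F : ℝ → ℝ → ℝ := fun r θ => u !₂[r * cos θ, r * sin θ] with hF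
  set P : ℝ → ℝ → ℝ := fun r θ => fderiv ℝ u !₂[r * cos θ, r * sin θ] !₂[cos θ, sin θ] with hP
  set Q : ℝ → ℝ → ℝ := fun r θ => fderiv ℝ u !₂[r * cos θ, r * sin θ] !₂[-sin θ, cos θ] with hQ
  have hFc : Continuous (Function.uncurry F) := by
    simp only [hF, Function.uncurry_def]; fun_prop
  have hPc : Continuous (Function.uncurry P) := by
    simp only [hP, Function.uncurry_def]; fun_prop
  have hQc : Continuous (Function.uncurry Q) := by
    simp only [hQ, Function.uncurry_def]; fun_prop
  have hPQ : ∀ r θ, ‖fderiv ℝ u !₂[r * cos θ, r * sin θ]‖^2 = P r θ ^2 + Q r θ ^2 := fun r θ =>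
    opnorm_sq _ _ _ (by rw [cos_sq_add_sin_sq])
  have hFr : ∀ θ r, HasDerivAt (fun r => F r θ) (P r θ) r := by
    intro θ r
    have h1 : HasDerivAt (fun r : ℝ => (!₂[r * cos θ, r * sin θ] : E2)) !₂[cos θ, sin θ] r := by
      have := hasDerivAt_mk ((hasDerivAt_id' r).mul_const (cos θ)) ((hasDerivAt_id' r).mul_const (sin θ))
      simpa using this
    exact ((hv.differentiable (by simp) _).hasFDerivAt.comp_hasDerivAt r h1)
  have hFt : ∀ r θ, HasDerivAt (F r) (r * Q r θ) θ := by
    intro r θ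
    have h1 : HasDerivAt (fun θ : ℝ => (!₂[r * cos θ, r * sin θ] : E2)) (r • !₂[-sin θ, cos θ]) θ := by
      have := hasDerivAt_mk ((hasDerivAt_cos θ).const_mul r) ((hasDerivAt_sin θ).const_mul r)
      convert this using 1
      ext i; fin_cases i <;> simp
    have := ((hv.differentiable (by simp) _).hasFDerivAt.comp_hasDerivAt θ h1)
    exact this.congr_deriv (by simp [hQ])
  refine ⟨(∫ θ in (-π)..π, F 1 θ) / (π - (-π)), ?_⟩
  set c := (∫ θ in (-π)..π, F 1 θ) / (π - (-π)) with hcdef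
  rw [disc_polar (by fun_prop), disc_polar (by fun_prop)]
  simp only [hPQ]
  change 2 * ∫ r in (0:ℝ)..1, ∫ θ in (-π)..π, r * (F r θ - c)^2 ≤ _
  have hF1 : ∀ r, Continuous (F r) := fun r => hFc.comp (by fun_prop : Continuous fun θ => (r, θ))
  have hP1 : ∀ r, Continuous (P r) := fun r => hPc.comp (by fun_prop : Continuous fun θ => (r, θ))
  have hQ1 : ∀ r, Continuous (Q r) := fun r => hQc.comp (by fun_prop : Continuous fun θ => (r, θ))
  have hP2 : ∀ θ, Continuous fun r => P r θ := fun θ => hPc.comp (by fun_prop : Continuous fun r => (r, θ))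
  have hF2 : ∀ θ, Continuous fun r => F r θ := fun θ => hFc.comp (by fun_prop : Continuous fun r => (r, θ))
  -- continuity of the two-variable integrands
  have c1 : Continuous (Function.uncurry fun r θ => r * (F r θ - c)^2) :=
    continuous_fst.mul ((hFc.sub continuous_const).pow 2)
  have c2 : Continuous (Function.uncurry fun r θ => r * (Q r θ)^2) :=
    continuous_fst.mul (hQc.pow 2)
  have c3 : Continuous (Function.uncurry fun r θ => r * (F r θ - F 1 θ)^2) :=
    continuous_fst.mul ((hFc.sub (hFc.comp (by fun_prop : Continuous fun p : ℝ × ℝ => ((1:ℝ), p.2)))).pow 2)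
  have c4 : Continuous (Function.uncurry fun r θ => r * (P r θ)^2) :=
    continuous_fst.mul (hPc.pow 2)
  have step1 : ∫ r in (0:ℝ)..1, ∫ θ in (-π)..π, r * (F r θ - c)^2 ≤
      ∫ r in (0:ℝ)..1, (1/2 * (∫ θ in (-π)..π, r * (Q r θ)^2) + ∫ θ in (-π)..π, r * (F r θ - F 1 θ)^2) := by
    apply intervalIntegral.integral_mono_on zero_le_one
    · exact (cont_int c1 _ _).intervalIntegrable _ _
    · exact ((continuous_const.mul (cont_int c2 _ _)).add (cont_int c3 _ _)).intervalIntegrable _ _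
    · intro r hr
      simp only [intervalIntegral.integral_const_mul]
      have l1 := lem_two (hF1 r) (hF1 1) (by linarith : -π < π) (F r (π/4))
      rw [← hcdef] at l1
      have s1 : F r (-(π/4)) = F r (π/4) := by
        simp only [hF, cos_neg, sin_neg, mul_neg, he2]
      have s2 : F r (3*π/4) = F r (π/4) := by
        have : 3*π/4 = π - π/4 := by ring
        simp only [hF, this, cos_pi_sub, sin_pi_sub, mul_neg, he1]
      have s3 : F r (-(3*π/4)) = F r (π/4) := by
        rw [← s2]
        simp only [hF, cos_neg, sin_neg, mul_neg, he2]
      have l2 := angular_bound (hFt r) (continuous_const.mul (hQ1 r)) rfl s1 s2 s3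
      simp only [mul_pow, intervalIntegral.integral_const_mul] at l2
      have hq : 0 ≤ ∫ θ in (-π)..π, (Q r θ)^2 :=
        intervalIntegral.integral_nonneg (by linarith) fun x _ => sq_nonneg _
      have hr2 : r^2 ≤ 1 := by nlinarith [hr.1, hr.2]
      have := mul_le_mul_of_nonneg_right hr2 hq
      have l3 : ∫ θ in (-π)..π, (F r θ - c)^2 ≤ 1/2 * (∫ θ in (-π)..π, (Q r θ)^2) +
        ∫ θ in (-π)..π, (F r θ - F 1 θ)^2 := by linarith
      have := mul_le_mul_of_nonneg_left l3 hr.1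
      linarith
  have step2 : ∫ r in (0:ℝ)..1, ∫ θ in (-π)..π, r * (F r θ - F 1 θ)^2 ≤
      1/2 * ∫ r in (0:ℝ)..1, ∫ θ in (-π)..π, r * (P r θ)^2 := by
    rw [swap_int c3 _ _ _ _ zero_le_one (by linarith), swap_int c4 _ _ _ _ zero_le_one (by linarith),
      ← intervalIntegral.integral_const_mul]
    apply intervalIntegral.integral_mono_on (by linarith)
    · exact (cont_int (H := fun θ r => r * (F r θ - F 1 θ)^2) (c3.comp continuous_swap) _ _).intervalIntegrable _ _
    · exact (continuous_const.mul (cont_int (H := fun θ r => r * (P r θ)^2) (c4.comp continuous_swap) _ _)).intervalIntegrable _ _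
    · intro θ _
      exact lem_radial (hFr θ) (hP2 θ)
  have step3 : ∫ r in (0:ℝ)..1, ∫ θ in (-π)..π, r * ((P r θ)^2 + (Q r θ)^2) =
     (∫ r in (0:ℝ)..1, ∫ θ in (-π)..π, r * (P r θ)^2) + ∫ r in (0:ℝ)..1, ∫ θ in (-π)..π, r * (Q r θ)^2 := by
    rw [← intervalIntegral.integral_add ((cont_int c4 _ _).intervalIntegrable _ _)
      ((cont_int c2 _ _).intervalIntegrable _ _)]
    congr 1
    ext r
    rw [← intervalIntegral.integral_add]
    · simp only [mul_add]
    · exact (continuous_const.mul ((hP1 r).pow 2)).intervalIntegrable _ _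
    · exact (continuous_const.mul ((hQ1 r).pow 2)).intervalIntegrable _ _
  rw [intervalIntegral.integral_add, intervalIntegral.integral_const_mul] at step1
  · rw [step3]; linarith
  · exact ((continuous_const.mul (cont_int c2 _ _))).intervalIntegrable _ _
  · exact (cont_int c3 _ _).intervalIntegrable _ _


/-- a linear isometry of the plane from an orthogonal matrix -/
def isoMk (a b c d : ℝ) (h1 : a^2 + c^2 = 1) (h2 : b^2 + d^2 = 1) (h3 : a*b + c*d = 0) :
    E2 ≃ₗᵢ[ℝ] E2 :=
  LinearIsometry.toLinearIsometryEquiv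
    { toFun := fun x => !₂[a * x 0 + b * x 1, c * x 0 + d * x 1]
      map_add' := by
        intro x y; ext i; fin_cases i <;> simp <;> ring
      map_smul' := by
        intro r x; ext i; fin_cases i <;> simp <;> ring
      norm_map' := by
        intro x
        have hh : ‖(!₂[a * x 0 + b * x 1, c * x 0 + d * x 1] : E2)‖^2 = ‖x‖^2 := by
          rw [norm_sq_E2, norm_sq_E2]
          simp
          linear_combination (x 0)^2 * h1 + (x 1)^2 * h2 + 2 * x 0 * x 1 * h3
        exact (sq_eq_sq₀ (norm_nonneg _) (norm_nonneg _)).1 hh } rfl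

theorem isoMk_apply (a b c d : ℝ) (h1 : a^2 + c^2 = 1) (h2 : b^2 + d^2 = 1) (h3 : a*b + c*d = 0)
    (x : E2) : isoMk a b c d h1 h2 h3 x = !₂[a * x 0 + b * x 1, c * x 0 + d * x 1] := rfl

theorem iso_disc (T : E2 ≃ₗᵢ[ℝ] E2) : T ⁻¹' unitDisc = unitDisc := by
  ext x; simp [unitDisc]

theorem int_disc_iso (T : E2 ≃ₗᵢ[ℝ] E2) (f : E2 → ℝ) :
    ∫ x in unitDisc, f (T x) = ∫ x in unitDisc, f x := by
  have := int_comp_iso T f unitDisc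
  rwa [iso_disc] at this

theorem bdd_unitDisc : Bornology.IsBounded unitDisc := Metric.isBounded_ball

theorem split_disc (R : E2 ≃ₗᵢ[ℝ] E2) {u : E2 → ℝ} (hu : ContDiff ℝ (⊤ : ℕ∞) u) :
    (∫ x in unitDisc, (u x)^2 = (∫ x in unitDisc, ((u x - u (R x))/2)^2)
      + ∫ x in unitDisc, ((u x + u (R x))/2)^2) ∧
    (∫ x in unitDisc, ‖fderiv ℝ u x‖^2 =
      (∫ x in unitDisc, ‖fderiv ℝ (fun y => (u y - u (R y))/2) x‖^2)
      + ∫ x in unitDisc, ‖fderiv ℝ (fun y => (u y + u (R y))/2) x‖^2) ∧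
    (∫ x in unitDisc, u x = ∫ x in unitDisc, (u x + u (R x))/2) := by
  have hc := hu.continuous
  have hR : ContDiff ℝ (⊤ : ℕ∞) (fun y => u (R y)) :=
    hu.comp R.toContinuousLinearEquiv.contDiff
  have hcR := hR.continuous
  have h1 : ContDiff ℝ (⊤ : ℕ∞) (fun y => (u y - u (R y))/2) := (hu.sub hR).div_const 2
  have h2 : ContDiff ℝ (⊤ : ℕ∞) (fun y => (u y + u (R y))/2) := (hu.add hR).div_const 2
  have hd := hu.continuous_fderiv (by simp)
  have hdR := hR.continuous_fderiv (by simp)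
  have hd1 := h1.continuous_fderiv (by simp)
  have hd2 := h2.continuous_fderiv (by simp)
  have I : ∀ {f : E2 → ℝ}, Continuous f → IntegrableOn f unitDisc :=
    fun h => intOn_bdd h bdd_unitDisc
  refine ⟨?_, ?_, ?_⟩
  · rw [← integral_add (I (by fun_prop)) (I (by fun_prop))]
    have e := int_disc_iso R (fun x => (u x)^2)
    have : ∀ x, ((u x - u (R x))/2)^2 + ((u x + u (R x))/2)^2 =
        (1/2) * (u x)^2 + (1/2) * (u (R x))^2 := by intro x; ring
    simp only [this]
    rw [integral_add (I (by fun_prop)) (I (by fun_prop)), integral_const_mul, integral_const_mul, e]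
    ring
  · rw [← integral_add (I (by fun_prop)) (I (by fun_prop))]
    have e := int_disc_iso R (fun x => ‖fderiv ℝ u x‖^2)
    have : ∀ x, ‖fderiv ℝ (fun y => (u y - u (R y))/2) x‖^2
        + ‖fderiv ℝ (fun y => (u y + u (R y))/2) x‖^2 =
        (1/2) * ‖fderiv ℝ u x‖^2 + (1/2) * ‖fderiv ℝ u (R x)‖^2 := by
      intro x
      rw [← fderiv_comp_iso R (u := u) x]
      have hux := (hu.differentiable (by simp)) x
      have hRx := (hR.differentiable (by simp)) x
      have e1 : fderiv ℝ (fun y => (u y - u (R y))/2) x =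
          (1/2 : ℝ) • (fderiv ℝ u x - fderiv ℝ (fun y => u (R y)) x) := by
        have := ((hux.hasFDerivAt.sub hRx.hasFDerivAt).const_smul (1/2:ℝ)).fderiv
        rw [← this]; congr 1; ext y; simp; ring
      have e2 : fderiv ℝ (fun y => (u y + u (R y))/2) x =
          (1/2 : ℝ) • (fderiv ℝ u x + fderiv ℝ (fun y => u (R y)) x) := by
        have := ((hux.hasFDerivAt.add hRx.hasFDerivAt).const_smul (1/2:ℝ)).fderiv
        rw [← this]; congr 1; ext y; simp; ring
      rw [e1, e2]
      simp only [opnorm_sq', _root_.smul_apply, _root_.sub_apply,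
        _root_.add_apply, smul_eq_mul]
      ring
    simp only [this]
    have hcc : Continuous (fun x => ‖fderiv ℝ u (R x)‖) := (hd.comp R.continuous).norm
    rw [integral_add (I (by fun_prop)) (I (by fun_prop)), integral_const_mul, integral_const_mul, e]
    ring
  · have e := int_disc_iso R u
    have : ∀ x, (u x + u (R x))/2 = (1/2) * u x + (1/2) * u (R x) := by intro x; ring
    simp only [this]
    rw [integral_add (I (by fun_prop)) (I (by fun_prop)), integral_const_mul, integral_const_mul, e]
    ring

theorem disc_poincare {u : E2 → ℝ} (hu : ContDiff ℝ (⊤ : ℕ∞) u) (h0 : ∫ x in unitDisc, u x = 0) :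
    2 * ∫ x in unitDisc, (u x)^2 ≤ ∫ x in unitDisc, ‖fderiv ℝ u x‖^2 := by
  have I : ∀ {f : E2 → ℝ}, Continuous f → IntegrableOn f unitDisc :=
    fun h => intOn_bdd h bdd_unitDisc
  let R1 := isoMk (-1) 0 0 1 (by norm_num) (by norm_num) (by norm_num)
  let R2 := isoMk 1 0 0 (-1) (by norm_num) (by norm_num) (by norm_num)
  let S := isoMk 0 1 1 0 (by norm_num) (by norm_num) (by norm_num)
  have hR1 : ∀ x y : ℝ, R1 !₂[x, y] = !₂[-x, y] := by intro x y; simp [R1, isoMk_apply]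
  have hR2 : ∀ x y : ℝ, R2 !₂[x, y] = !₂[x, -y] := by intro x y; simp [R2, isoMk_apply]
  have hS : ∀ x y : ℝ, S !₂[x, y] = !₂[y, x] := by intro x y; simp [S, isoMk_apply]
  have sm : ∀ (R : E2 ≃ₗᵢ[ℝ] E2) {w : E2 → ℝ}, ContDiff ℝ (⊤ : ℕ∞) w →
      ContDiff ℝ (⊤ : ℕ∞) (fun y => w (R y)) := fun R w hw =>
    hw.comp R.toContinuousLinearEquiv.contDiff
  obtain ⟨a1, a2, a3⟩ := split_disc R1 hu
  have hv : ContDiff ℝ (⊤ : ℕ∞) (fun y => (u y - u (R1 y))/2) := (hu.sub (sm R1 hu)).div_const 2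
  set w : E2 → ℝ := fun y => (u y + u (R1 y))/2 with hw
  have hws : ContDiff ℝ (⊤ : ℕ∞) w := (hu.add (sm R1 hu)).div_const 2
  have b1 := disc_odd hv (by intro x y; simp only [hR1, neg_neg]; ring)
  obtain ⟨c1, c2, c3⟩ := split_disc R2 hws
  set z : E2 → ℝ := fun y => (w y - w (R2 y))/2 with hz
  set q : E2 → ℝ := fun y => (w y + w (R2 y))/2 with hq
  have hzs : ContDiff ℝ (⊤ : ℕ∞) z := (hws.sub (sm R2 hws)).div_const 2
  have hqs : ContDiff ℝ (⊤ : ℕ∞) q := (hws.add (sm R2 hws)).div_const 2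
  have b2 := disc_odd (sm S hzs) (by intro x y; simp only [hz, hS, hR2, neg_neg]; ring)
  simp only [fderiv_comp_iso] at b2
  rw [int_disc_iso S (fun x => z x^2), int_disc_iso S (fun x => ‖fderiv ℝ z x‖^2)] at b2
  have hw1 : ∀ x y, w !₂[-x, y] = w !₂[x, y] := by
    intro x y; simp only [hw, hR1, neg_neg]; ring
  obtain ⟨c, b3⟩ := disc_even hqs
    (by intro x y; simp only [hq, hR2, hw1])
    (by intro x y; simp only [hq, hR2, neg_neg]; ring)
  have q0 : ∫ x in unitDisc, q x = 0 := by rw [← c3, ← h0, a3]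
  have hqc := hqs.continuous
  have b4 : ∫ x in unitDisc, (q x)^2 ≤ ∫ x in unitDisc, (q x - c)^2 := by
    have : ∀ x, (q x - c)^2 = (q x)^2 + (-(2 * c)) * q x + c^2 := by intro x; ring
    simp only [this]
    rw [integral_add (I (by fun_prop)) (I (by fun_prop)), integral_add (I (by fun_prop)) (I (by fun_prop)),
      integral_const_mul, q0]
    have : 0 ≤ ∫ x in unitDisc, c^2 := by positivity
    linarith
  have e1 : ∫ x in unitDisc, ((u x + u (R1 x))/2)^2 = ∫ x in unitDisc, (w x)^2 := rfl
  have e2 : ∫ x in unitDisc, ((w x + w (R2 x))/2)^2 = ∫ x in unitDisc, (q x)^2 := rfl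
  have e3 : ∫ x in unitDisc, ((w x - w (R2 x))/2)^2 = ∫ x in unitDisc, (z x)^2 := rfl
  rw [a1, a2, e1, c1, c2, e2, e3]
  linarith

theorem int_sq_pos {Ω : Set E2} (ho : IsOpen Ω) (hb : Bornology.IsBounded Ω) {u : E2 → ℝ}
    (hu : Continuous u) {x : E2} (hx : x ∈ Ω) (hux : u x ≠ 0) : 0 < ∫ x in Ω, (u x)^2 := by
  rw [setIntegral_pos_iff_support_of_nonneg_ae (Eventually.of_forall fun x => sq_nonneg _)
    (intOn_bdd (by fun_prop) hb)]
  have h1 : IsOpen (Function.support (fun x => u x^2) ∩ Ω) :=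
    ((hu.pow 2).isOpen_support).inter ho
  exact h1.measure_pos _ ⟨x, by simpa using hux, hx⟩

theorem nEig1_disc : 2 ≤ nEig1 unitDisc := by
  apply le_csInf
  · let R1 := isoMk (-1) 0 0 1 (by norm_num) (by norm_num) (by norm_num)
    have hs : ContDiff ℝ (⊤ : ℕ∞) (fun x : E2 => x 0) := by fun_prop
    refine ⟨_, fun x => x 0, hs, ?_, ?_, rfl⟩
    · have := int_disc_iso R1 (fun x => x 0)
      simp [R1, isoMk_apply, integral_neg] at this
      linarith
    · refine (int_sq_pos (x := !₂[1/2, 0]) Metric.isOpen_ball bdd_unitDisc hs.continuous ?_ ?_).ne'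
      · exact (mem_disc _ _).2 (by norm_num)
      · simp
  · rintro R ⟨u, h1, h2, h3, rfl⟩
    have hp : 0 < ∫ x in unitDisc, (u x)^2 := lt_of_le_of_ne (by positivity) h3.symm
    rw [le_div_iff₀ hp]
    exact disc_poincare h1 h2


/-- smooth truncation -/
def Th (w : ℝ) : ℝ := w * smoothTransition (w - 1)

theorem Th_smooth : ContDiff ℝ (⊤ : ℕ∞) Th := by
  unfold Th
  exact contDiff_id.mul (smoothTransition.contDiff.comp (contDiff_id.sub contDiff_const))

theorem Th_zero {w : ℝ} (h : w ≤ 1) : Th w = 0 := by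
  simp [Th, smoothTransition.zero_of_nonpos (sub_nonpos.2 h)]

theorem Th_id {w : ℝ} (h : 2 ≤ w) : Th w = w := by
  simp [Th, smoothTransition.one_of_one_le (by linarith : (1:ℝ) ≤ w - 1)]

theorem Th_abs (w : ℝ) : |Th w| ≤ |w| := by
  rw [Th, abs_mul, abs_of_nonneg (smoothTransition.nonneg _)]
  exact mul_le_of_le_one_right (abs_nonneg _) (smoothTransition.le_one _)

theorem dTh_zero {w : ℝ} (h : w < 1) : deriv Th w = 0 := by
  have : Th =ᶠ[nhds w] fun _ => 0 := by
    filter_upwards [Iio_mem_nhds h] with y hy using Th_zero (le_of_lt hy)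
  rw [this.deriv_eq]; simp

theorem dTh_one {w : ℝ} (h : 2 < w) : deriv Th w = 1 := by
  have : Th =ᶠ[nhds w] fun x => x := by
    filter_upwards [Ioi_mem_nhds h] with y hy using Th_id (le_of_lt hy)
  rw [this.deriv_eq]; simp

theorem dTh_cont : Continuous (deriv Th) := Th_smooth.continuous_deriv (by simp)

theorem dTh_bdd : ∃ C, ∀ w, |deriv Th w| ≤ C := by
  obtain ⟨C, hC⟩ := (isCompact_Icc (a := (1:ℝ)) (b := 2)).exists_bound_of_continuousOn
    dTh_cont.continuousOn
  refine ⟨max C 1, fun w => ?_⟩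
  by_cases h1 : w < 1
  · rw [dTh_zero h1]; simp
  by_cases h2 : 2 < w
  · rw [dTh_one h2]; simp
  · exact le_trans (hC w ⟨not_lt.1 h1, not_lt.1 h2⟩) (le_max_left _ _)

theorem sine0 (η : ℝ) (hη : 0 < η) : ∃ f : ℝ → ℝ, ContDiff ℝ (⊤ : ℕ∞) f ∧ HasCompactSupport f ∧
    tsupport f ⊆ Ioo 0 π ∧ 0 < ∫ x, (f x)^2 ∧ ∫ x, (deriv f x)^2 ≤ (1 + η) * ∫ x, (f x)^2 := by
  have hpi := pi_pos
  let χ : ContDiffBump (π/2) := ⟨π/2, π, by positivity, by linarith⟩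
  obtain ⟨C, hC⟩ := dTh_bdd
  let f : ℕ → ℝ → ℝ := fun n x => (1/((n:ℝ)+1)) * Th (((n:ℝ)+1) * sin x) * χ x
  have hn : ∀ n : ℕ, 0 < (n:ℝ)+1 := fun n => by positivity
  have hχ1 : ∀ x ∈ Icc 0 π, χ x = 1 := by
    intro x hx
    apply χ.one_of_mem_closedBall
    rw [Real.closedBall_eq_Icc]
    exact ⟨by simp only [χ]; linarith [hx.1], by simp only [χ]; linarith [hx.2]⟩
  have hχ0 : ∀ x, χ x ≠ 0 → x ∈ Ioo (-(π/2)) (3*π/2) := by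
    intro x hx
    have : x ∈ Function.support χ := hx
    rw [χ.support_eq, Real.ball_eq_Ioo] at this
    exact ⟨by have := this.1; simp only [χ] at this; linarith,
      by have := this.2; simp only [χ] at this; linarith⟩
  have hf : ∀ n, ContDiff ℝ (⊤ : ℕ∞) (f n) := by
    intro n
    refine (contDiff_const.mul (Th_smooth.comp (contDiff_const.mul contDiff_sin))).mul χ.contDiff
  have hcl : ∀ n, tsupport (f n) ⊆ {x | 1/((n:ℝ)+1) ≤ sin x} ∩ Icc (-(π/2)) (3*π/2) := by
    intro n
    apply closure_minimal
    · intro x hx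
      have hx' : f n x ≠ 0 := hx
      have h1 : Th (((n:ℝ)+1) * sin x) ≠ 0 := by
        intro h; apply hx'; simp [f, h]
      have h2 : χ x ≠ 0 := by
        intro h; apply hx'; simp [f, h]
      have h3 : 1 < ((n:ℝ)+1) * sin x := by
        by_contra h; exact h1 (Th_zero (not_lt.1 h))
      refine ⟨?_, Ioo_subset_Icc_self (hχ0 x h2)⟩
      simp only [mem_ofPred_eq]
      rw [div_le_iff₀ (hn n)]; linarith
    · exact (isClosed_le continuous_const continuous_sin).inter isClosed_Icc
  have hts : ∀ n, tsupport (f n) ⊆ Ioo 0 π := by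
    intro n x hx
    obtain ⟨h1, h2, h3⟩ := hcl n hx
    have hpos : 0 < sin x := lt_of_lt_of_le (by have := hn n; positivity) h1
    constructor
    · by_contra h
      exact absurd (sin_nonpos_of_nonpos_of_neg_pi_le (not_lt.1 h) (by linarith)) (not_le.2 hpos)
    · by_contra h
      have := sin_nonneg_of_nonneg_of_le_pi (x := x - π) (by linarith [not_lt.1 h]) (by linarith)
      rw [sin_sub_pi] at this; linarith
  have hcs : ∀ n, HasCompactSupport (f n) := fun n =>
    HasCompactSupport.of_support_subset_isCompact (isCompact_Icc (a := -(π/2)) (b := 3*π/2))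
      (fun x hx => (hcl n (subset_tsupport _ hx)).2)
  have e1 : ∀ n, ∫ x, (f n x)^2 = ∫ x in Ioo 0 π, ((1/((n:ℝ)+1)) * Th (((n:ℝ)+1) * sin x))^2 := by
    intro n
    rw [← setIntegral_eq_integral_of_forall_compl_eq_zero (s := Ioo 0 π)]
    · apply setIntegral_congr_fun measurableSet_Ioo
      intro x hx
      simp [f, hχ1 x (Ioo_subset_Icc_self hx)]
    · intro x hx
      have : f n x = 0 := image_eq_zero_of_notMem_tsupport (fun h => hx (hts n h))
      simp [this]
  have e2 : ∀ n, ∫ x, (deriv (f n) x)^2 = ∫ x in Ioo 0 π, (deriv Th (((n:ℝ)+1) * sin x) * cos x)^2 := by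
    intro n
    rw [← setIntegral_eq_integral_of_forall_compl_eq_zero (s := Ioo 0 π)]
    · apply setIntegral_congr_fun measurableSet_Ioo
      intro x hx
      have he : f n =ᶠ[nhds x] fun x => (1/((n:ℝ)+1)) * Th (((n:ℝ)+1) * sin x) := by
        filter_upwards [isOpen_Ioo.mem_nhds hx] with y hy
        simp [f, hχ1 y (Ioo_subset_Icc_self hy)]
      have hd := (((Th_smooth.differentiable (by simp) (((n:ℝ)+1) * sin x)).hasDerivAt.comp x
        ((hasDerivAt_sin x).const_mul ((n:ℝ)+1))).const_mul (1/((n:ℝ)+1))).deriv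
      simp only [Function.comp_def] at hd
      simp only
      rw [he.deriv_eq, hd]
      have := (hn n).ne'
      field_simp
    · intro x hx
      have : deriv (f n) x = 0 := by
        apply image_eq_zero_of_notMem_tsupport (fun h => hx (hts n (tsupport_deriv_subset h)))
      simp [this]
  have hev : ∀ x ∈ Ioo 0 π, ∀ᶠ n : ℕ in atTop, 2 < ((n:ℝ)+1) * sin x := by
    intro x hx
    have hs := sin_pos_of_mem_Ioo hx
    have : Tendsto (fun n : ℕ => ((n:ℝ)+1) * sin x) atTop atTop :=
      (tendsto_natCast_atTop_atTop.atTop_add tendsto_const_nhds).atTop_mul_const hs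
    exact this.eventually_gt_atTop 2
  have : IsFiniteMeasure (volume.restrict (Ioo 0 π)) := ⟨by simp⟩
  have t1 : Tendsto (fun n => ∫ x, (f n x)^2) atTop (nhds (∫ x in Ioo 0 π, (sin x)^2)) := by
    simp only [e1]
    apply tendsto_integral_of_dominated_convergence (fun _ => 1)
    · intro n
      apply Continuous.aestronglyMeasurable
      have := Th_smooth.continuous
      fun_prop
    · exact integrable_const _
    · intro n
      refine Eventually.of_forall fun x => ?_
      have h1 := Th_abs (((n:ℝ)+1) * sin x)
      rw [norm_pow, norm_mul, norm_eq_abs, norm_eq_abs, abs_of_pos (by have := hn n; positivity)]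
      have h2 : (1/((n:ℝ)+1)) * |Th (((n:ℝ)+1) * sin x)| ≤ 1 := by
        rw [one_div, inv_mul_le_iff₀ (hn n), mul_one]
        rw [abs_mul, abs_of_pos (hn n)] at h1
        exact h1.trans (mul_le_of_le_one_right (hn n).le (abs_sin_le_one x))
      exact pow_le_one₀ (by have := hn n; positivity) h2
    · refine (ae_restrict_mem measurableSet_Ioo).mono fun x hx => ?_
      apply tendsto_const_nhds.congr'
      filter_upwards [hev x hx] with n h
      rw [Th_id h.le]
      have := (hn n).ne'
      field_simp
  have t2 : Tendsto (fun n => ∫ x, (deriv (f n) x)^2) atTop (nhds (∫ x in Ioo 0 π, (cos x)^2)) := by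
    simp only [e2]
    apply tendsto_integral_of_dominated_convergence (fun _ => C^2)
    · intro n
      apply Continuous.aestronglyMeasurable
      have := dTh_cont
      fun_prop
    · exact integrable_const _
    · intro n
      refine Eventually.of_forall fun x => ?_
      rw [norm_pow, norm_mul, norm_eq_abs, norm_eq_abs]
      apply pow_le_pow_left₀ (by positivity)
      calc _ ≤ C * 1 := mul_le_mul (hC _) (abs_cos_le_one x) (abs_nonneg _) ((abs_nonneg _).trans (hC 0))
        _ = C := mul_one C
    · refine (ae_restrict_mem measurableSet_Ioo).mono fun x hx => ?_
      apply tendsto_const_nhds.congr'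
      filter_upwards [hev x hx] with n h
      rw [dTh_one h, one_mul]
  have v1 : ∫ x in Ioo 0 π, (sin x)^2 = π/2 := by
    rw [← integral_Ioc_eq_integral_Ioo, ← intervalIntegral.integral_of_le hpi.le, integral_sin_sq]; simp
  have v2 : ∫ x in Ioo 0 π, (cos x)^2 = π/2 := by
    rw [← integral_Ioc_eq_integral_Ioo, ← intervalIntegral.integral_of_le hpi.le, integral_cos_sq]; simp
  rw [v1] at t1
  rw [v2] at t2
  have t3 := (t1.const_mul (1+η)).sub t2
  have p1 := t1.eventually_const_lt (show (0:ℝ) < π/2 by positivity)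
  have p2 := t3.eventually_const_lt (show (0:ℝ) < (1+η)*(π/2) - π/2 by
    have : 0 < η * (π/2) := by positivity
    linarith)
  obtain ⟨n, h1, h2⟩ := (p1.and p2).exists
  exact ⟨f n, hf n, hcs n, hts n, h1, by linarith⟩

theorem sine1 (a b η : ℝ) (hab : a < b) (hη : 0 < η) : ∃ f : ℝ → ℝ, ContDiff ℝ (⊤ : ℕ∞) f ∧
    HasCompactSupport f ∧ tsupport f ⊆ Ioo a b ∧ 0 < ∫ x, (f x)^2 ∧
    ∫ x, (deriv f x)^2 ≤ (1 + η) * (π/(b-a))^2 * ∫ x, (f x)^2 := by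
  have hpi := pi_pos
  obtain ⟨f, h1, h2, h3, h4, h5⟩ := sine0 η hη
  set k := π/(b-a) with hk
  have hba : 0 < b - a := by linarith
  have hk0 : 0 < k := by positivity
  set g : ℝ → ℝ := fun x => f (k * (x - a)) with hg
  have hgs : ContDiff ℝ (⊤ : ℕ∞) g := h1.comp (contDiff_const.mul (contDiff_id.sub contDiff_const))
  have hcont : Continuous (fun x : ℝ => k * (x - a)) := by fun_prop
  have hts : tsupport g ⊆ (fun x : ℝ => k * (x - a)) ⁻¹' (tsupport f) :=
    tsupport_comp_subset_preimage f hcont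
  have hsub : tsupport g ⊆ Ioo a b := by
    intro x hx
    obtain ⟨q1, q2⟩ := h3 (hts hx)
    simp only at q1 q2
    constructor
    · have := pos_of_mul_pos_right q1 hk0.le
      linarith
    · have : k * (x - a) < k * (b - a) := by
        calc _ < π := q2
          _ = _ := by rw [hk]; field_simp
      have := lt_of_mul_lt_mul_left this hk0.le
      linarith
  have hcs : HasCompactSupport g :=
    HasCompactSupport.of_support_subset_isCompact (isCompact_Icc (a := a) (b := b))
      (fun x hx => Ioo_subset_Icc_self (hsub (subset_tsupport _ hx)))
  have sc : ∀ F : ℝ → ℝ, ∫ x, F (k * (x - a)) = k⁻¹ * ∫ x, F x := by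
    intro F
    rw [integral_sub_right_eq_self (fun x => F (k * x)) a, Measure.integral_comp_mul_left]
    simp [abs_of_pos hk0]
  have hd : ∀ x, deriv g x = k * deriv f (k * (x - a)) := by
    intro x
    have hf := (h1.differentiable (by simp) (k * (x - a))).hasDerivAt
    have hl : HasDerivAt (fun x : ℝ => k * (x - a)) k x := by
      simpa using ((hasDerivAt_id' x).sub_const a).const_mul k
    have := (hf.comp x hl).deriv
    rw [mul_comm, ← this]; rfl
  have i1 : ∫ x, (g x)^2 = k⁻¹ * ∫ x, (f x)^2 := sc (fun x => (f x)^2)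
  have i2 : ∫ x, (deriv g x)^2 = k^2 * (k⁻¹ * ∫ x, (deriv f x)^2) := by
    rw [← sc (fun x => (deriv f x)^2), ← integral_const_mul]
    congr 1; ext x; rw [hd]; ring
  refine ⟨g, hgs, hcs, hsub, ?_, ?_⟩
  · rw [i1]; positivity
  · rw [i1, i2]
    have : k^2 * (k⁻¹ * ∫ x, (deriv f x)^2) ≤ k^2 * (k⁻¹ * ((1+η) * ∫ x, (f x)^2)) := by gcongr
    linarith


theorem par_int (e s : ℝ) {F G : ℝ → ℝ} (hF : Continuous F) (hG : Continuous G)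
    (cF : HasCompactSupport F) (cG : HasCompactSupport G) :
    Integrable (fun p : ℝ × ℝ => F p.1 * G (p.2 - e - s * p.1)) ∧
    ∫ p : ℝ × ℝ, F p.1 * G (p.2 - e - s * p.1) = (∫ x, F x) * ∫ x, G x := by
  have iF := hF.integrable_of_hasCompactSupport (μ := volume) cF
  have iG := hG.integrable_of_hasCompactSupport (μ := volume) cG
  have tr : ∀ (H : ℝ → ℝ) (x : ℝ), ∫ y, H (y - e - s * x) = ∫ y, H y := by
    intro H x
    have := integral_sub_right_eq_self (μ := volume) H (e + s * x)
    rw [← this]; congr 1; ext y; congr 1; ring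
  have hi : Integrable (fun p : ℝ × ℝ => F p.1 * G (p.2 - e - s * p.1)) := by
    refine (integrable_prod_iff (Continuous.aestronglyMeasurable (by fun_prop))).2 ⟨?_, ?_⟩
    · refine Eventually.of_forall fun x => ?_
      simp only
      apply Integrable.const_mul
      have := iG.comp_sub_right (e + s * x)
      have e0 : (fun y => G (y - e - s * x)) = fun y => G (y - (e + s * x)) := by
        ext y; congr 1; ring
      rw [e0]; exact this
    · simp only [norm_mul]
      have : ∀ x, ∫ y, ‖F x‖ * ‖G (y - e - s * x)‖ = ‖F x‖ * ∫ y, ‖G y‖ := by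
        intro x
        rw [integral_const_mul, tr (fun y => ‖G y‖)]
      simp only [this]
      exact iF.norm.mul_const _
  refine ⟨hi, ?_⟩
  rw [Measure.volume_eq_prod, integral_prod _ hi]
  simp only [integral_const_mul, tr G]
  rw [integral_mul_const]

theorem dirichlet_par {Ω : Set E2} (a b e s m η : ℝ) (hab : a < b) (hm : 0 < m) (hη : 0 < η)
    (hsub : ∀ x w, x ∈ Ioo a b → w ∈ Ioo 0 m → (!₂[x, w + e + s * x] : E2) ∈ Ω) :
    dEig1 Ω ≤ (1 + η) * ((π/(b-a))^2 + (1 + s^2) * (π/m)^2) := by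
  obtain ⟨f, f1, f2, f3, f4, f5⟩ := sine1 a b η hab hη
  obtain ⟨g, g1, g2, g3, g4, g5⟩ := sine1 0 m η hm hη
  rw [sub_zero] at g5
  have cf := f1.continuous
  have cg := g1.continuous
  have cf' : Continuous (deriv f) := f1.continuous_deriv (by simp)
  have cg' : Continuous (deriv g) := g1.continuous_deriv (by simp)
  set u : E2 → ℝ := fun z => f (z 0) * g (z 1 - e - s * z 0) with hu
  have us : ContDiff ℝ (⊤ : ℕ∞) u := by
    have h0 : ContDiff ℝ (⊤ : ℕ∞) (fun x : E2 => x 0) := by fun_prop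
    have h1 : ContDiff ℝ (⊤ : ℕ∞) (fun x : E2 => x 1 - e - s * x 0) := by fun_prop
    exact (f1.comp h0).mul (g1.comp h1)
  set K : Set E2 := (fun p : ℝ × ℝ => (!₂[p.1, p.2 + e + s * p.1] : E2)) ''
    (tsupport f ×ˢ tsupport g) with hK
  have hKc : IsCompact K := by
    apply IsCompact.image (f2.isCompact.prod g2.isCompact)
    fun_prop
  have hsupp : Function.support u ⊆ K := by
    intro z hz
    have hz' : f (z 0) * g (z 1 - e - s * z 0) ≠ 0 := hz
    refine ⟨(z 0, z 1 - e - s * z 0), ⟨subset_tsupport _ (left_ne_zero_of_mul hz'),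
      subset_tsupport _ (right_ne_zero_of_mul hz')⟩, ?_⟩
    simp only
    rw [show z 1 - e - s * z 0 + e + s * z 0 = z 1 by ring]
    exact eta_E2 z
  have hts : tsupport u ⊆ Ω := by
    refine (closure_minimal hsupp hKc.isClosed).trans ?_
    rintro _ ⟨⟨x, w⟩, ⟨h1, h2⟩, rfl⟩
    exact hsub x w (f3 h1) (g3 h2)
  have hcs : HasCompactSupport u := HasCompactSupport.of_support_subset_isCompact hKc hsupp
  have csq : ∀ {F : ℝ → ℝ}, HasCompactSupport F → HasCompactSupport (fun x => (F x)^2) := by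
    intro F hF
    exact hF.comp_left (g := fun t : ℝ => t^2) (by simp)
  have A := par_int e s (F := fun x => (f x)^2) (G := fun x => (g x)^2)
    (by fun_prop) (by fun_prop) (csq f2) (csq g2)
  have B1 := par_int e s (F := fun x => (deriv f x)^2) (G := fun x => (g x)^2)
    (by fun_prop) (by fun_prop) (csq f2.deriv) (csq g2)
  have B2 := par_int e s (F := fun x => f x * deriv f x) (G := fun x => g x * deriv g x)
    (by fun_prop) (by fun_prop) f2.mul_right g2.mul_right
  have B3 := par_int e s (F := fun x => (f x)^2) (G := fun x => (deriv g x)^2)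
    (by fun_prop) (by fun_prop) (csq f2) (csq g2.deriv)
  have cross : ∫ x, f x * deriv f x = 0 := by
    have h := integral_eq_zero_of_hasDerivAt_of_integrable (f := fun x => (f x)^2)
      (f' := fun x => 2 * (f x * deriv f x))
      (fun x => by
        have := ((f1.differentiable (by simp) x).hasDerivAt).fun_pow 2
        exact this.congr_deriv (by ring))
      ((cf.mul cf').integrable_of_hasCompactSupport f2.mul_right |>.const_mul 2)
      ((cf.pow 2).integrable_of_hasCompactSupport (csq f2))
    rw [integral_const_mul] at h
    linarith
  have hnorm : ∀ x y : ℝ, ‖fderiv ℝ u !₂[x, y]‖^2 =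
      (deriv f x)^2 * (g (y - e - s * x))^2 + ((-2 * s) * ((f x * deriv f x) *
        (g (y - e - s * x) * deriv g (y - e - s * x))) +
      (1 + s^2) * ((f x)^2 * (deriv g (y - e - s * x))^2)) := by
    intro x y
    have hud := (us.differentiable (by simp) !₂[x, y]).hasFDerivAt
    have hfd := (f1.differentiable (by simp) x).hasDerivAt
    have hgd := (g1.differentiable (by simp) (y - e - s * x)).hasDerivAt
    have d1 : fderiv ℝ u !₂[x, y] !₂[1, 0] =
        deriv f x * g (y - e - s * x) - s * (f x * deriv g (y - e - s * x)) := by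
      have l1 := hud.comp_hasDerivAt x (hasDerivAt_mk (hasDerivAt_id' x) (hasDerivAt_const x y))
      have hl : HasDerivAt (fun t : ℝ => y - e - s * t) (-s) x := by
        simpa using ((hasDerivAt_id' x).const_mul s).const_sub (y - e)
      have l2 := hfd.fun_mul (hgd.comp x hl)
      have := l1.unique (l2.congr_of_eventuallyEq (Eventually.of_forall fun t => by simp [hu]))
      rw [this]; simp; ring
    have d2 : fderiv ℝ u !₂[x, y] !₂[0, 1] = f x * deriv g (y - e - s * x) := by
      have l1 := hud.comp_hasDerivAt y (hasDerivAt_mk (hasDerivAt_const y x) (hasDerivAt_id' y))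
      have hl : HasDerivAt (fun t : ℝ => t - e - s * x) 1 y := by
        simpa using ((hasDerivAt_id' y).sub_const e).sub_const (s * x)
      have l2 := (hgd.comp y hl).const_mul (f x)
      have := l1.unique (l2.congr_of_eventuallyEq (Eventually.of_forall fun t => by simp [hu]))
      rw [this]; simp
    rw [opnorm_sq', d1, d2]
    ring
  have i1 : ∫ z, (u z)^2 = (∫ x, (f x)^2) * ∫ x, (g x)^2 := by
    rw [int_E2, ← A.2]
    congr 1; ext p; simp [hu]; ring
  have i2 : ∫ z, ‖fderiv ℝ u z‖^2 = (∫ x, (deriv f x)^2) * (∫ x, (g x)^2)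
      + (1 + s^2) * ((∫ x, (f x)^2) * ∫ x, (deriv g x)^2) := by
    rw [int_E2]
    simp only [hnorm]
    have J1 := B2.1.const_mul (-2 * s)
    have J2 := B3.1.const_mul (1 + s^2)
    rw [integral_add B1.1 (by exact J1.add J2), integral_add J1 J2, integral_const_mul, integral_const_mul]
    rw [B1.2, B2.2, B3.2, cross]; ring
  refine (dEig1_le us hcs hts (by rw [i1]; positivity)).trans ?_
  rw [i1, i2, div_le_iff₀ (by positivity)]
  have k1 : (∫ x, (deriv f x)^2) * (∫ x, (g x)^2) ≤
      ((1 + η) * (π/(b-a))^2 * ∫ x, (f x)^2) * (∫ x, (g x)^2) := by gcongr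
  have k2 : (1 + s^2) * ((∫ x, (f x)^2) * ∫ x, (deriv g x)^2) ≤
      (1 + s^2) * ((∫ x, (f x)^2) * ((1 + η) * (π/m)^2 * ∫ x, (g x)^2)) := by gcongr
  linarith


theorem mollify {K : ℝ → ℝ} {L : NNReal} (hK : LipschitzWith L K) :
    ∃ k : ℕ → ℝ → ℝ, (∀ n, ContDiff ℝ (⊤ : ℕ∞) (k n)) ∧ (∀ n x, |deriv (k n) x| ≤ L) ∧
      ∀ x, Tendsto (fun n => k n x) atTop (nhds (K x)) := by
  let φ : ℕ → ContDiffBump (0:ℝ) := fun n =>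
    ⟨1/((n:ℝ)+1)/2, 1/((n:ℝ)+1), by positivity, half_lt_self (by positivity)⟩
  let k : ℕ → ℝ → ℝ := fun n =>
    convolution ((φ n).normed volume) K (ContinuousLinearMap.lsmul ℝ ℝ) volume
  have hKc := hK.continuous
  refine ⟨k, ?_, ?_, ?_⟩
  · intro n
    exact (φ n).hasCompactSupport_normed.contDiff_convolution_left _ (φ n).contDiff_normed
      hKc.locallyIntegrable
  · intro n x
    rw [← norm_eq_abs]
    apply norm_deriv_le_of_lipschitz
    apply LipschitzWith.of_dist_le_mul
    intro a b
    have hintg : ∀ a : ℝ, Integrable (fun t => (φ n).normed volume t * K (a - t)) := by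
      intro a
      apply Continuous.integrable_of_hasCompactSupport
      · have := (φ n).continuous_normed (μ := volume)
        fun_prop
      · exact (φ n).hasCompactSupport_normed.mul_right
    have e : ∀ a, k n a = ∫ t, (φ n).normed volume t * K (a - t) := fun a => rfl
    rw [Real.dist_eq, e, e, ← integral_sub (hintg a) (hintg b)]
    have hi1 := (φ n).integrable_normed (μ := volume)
    calc _ ≤ ∫ t, (φ n).normed volume t * (L * dist a b) := by
          rw [← norm_eq_abs]
          apply norm_integral_le_of_norm_le (hi1.mul_const _)
          refine Eventually.of_forall fun t => ?_
          rw [← mul_sub, norm_mul, norm_of_nonneg ((φ n).nonneg_normed t)]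
          apply mul_le_mul_of_nonneg_left _ ((φ n).nonneg_normed t)
          have := hK.dist_le_mul (a - t) (b - t)
          rwa [dist_sub_right, Real.dist_eq] at this
      _ = L * dist a b := by
          rw [integral_mul_const, (φ n).integral_normed, one_mul]
  · intro x
    apply ContDiffBump.convolution_tendsto_right_of_continuous _ hKc
    exact tendsto_one_div_add_atTop_nhds_zero_nat

theorem chord_measure {Ω : Set E2} (ho : IsOpen Ω) {M : ℝ}
    (hM : ∀ p ∈ Ω, ∀ q ∈ Ω, p 0 = q 0 → q 1 - p 1 ≤ M) {s : Set ℝ} (hs : MeasurableSet s) :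
    (volume.restrict Ω).map (fun z : E2 => z 0) s ≤ ENNReal.ofReal M * volume s := by
  have hX : Measurable (fun z : E2 => z 0) := by fun_prop
  rw [Measure.map_apply hX hs, Measure.restrict_apply (hX hs), ← mp_mk.measure_preimage_emb me_mk]
  have hmk : Measurable (fun p : ℝ × ℝ => (!₂[p.1, p.2] : E2)) := mp_mk.measurable
  have hms : MeasurableSet ((fun p : ℝ × ℝ => (!₂[p.1, p.2] : E2)) ⁻¹'
    ((fun z : E2 => z 0) ⁻¹' s ∩ Ω)) := hmk ((hX hs).inter ho.measurableSet)
  rw [Measure.volume_eq_prod, Measure.prod_apply hms]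
  calc _ ≤ ∫⁻ x, s.indicator (fun _ => ENNReal.ofReal M) x := by
        apply lintegral_mono
        intro x
        simp only
        by_cases hx : x ∈ s
        · rw [indicator_of_mem hx]
          refine (Real.volume_le_diam _).trans ?_
          apply Metric.ediam_le
          intro y hy z hz
          have hy' := hy.2
          have hz' := hz.2
          rw [edist_dist]
          apply ENNReal.ofReal_le_ofReal
          rw [Real.dist_eq, abs_le]
          have h1 := hM _ hy' _ hz' (by simp)
          have h2 := hM _ hz' _ hy' (by simp)
          simp at h1 h2
          constructor <;> linarith
        · rw [indicator_of_notMem hx]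
          have : Prod.mk x ⁻¹' ((fun p : ℝ × ℝ => (!₂[p.1, p.2] : E2)) ⁻¹'
            ((fun z : E2 => z 0) ⁻¹' s ∩ Ω)) = ∅ := by
            ext y; simp [hx]
          rw [this]; simp
    _ = _ := by rw [lintegral_indicator_const hs]

/-- the distribution function transport -/
theorem transport (ν : Measure ℝ) [IsFiniteMeasure ν] {M R : ℝ} (hM : 0 ≤ M)
    (hν : ∀ s, MeasurableSet s → ν s ≤ ENNReal.ofReal M * volume s)
    (hR : ν (Iic (-R)) = 0) (hR' : ν (Ioi R) = 0) :
    ∃ G : ℝ → ℝ, LipschitzWith ⟨M, hM⟩ G ∧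
      ν.map G = volume.restrict (Icc 0 (ν.real univ)) := by
  set G : ℝ → ℝ := fun x => ν.real (Iic x) with hG
  set V := ν.real univ with hV
  have hmono : Monotone G := fun a b h => measureReal_mono (Iic_subset_Iic.2 h)
  have hdiff : ∀ a b, a ≤ b → G b - G a ≤ M * (b - a) := by
    intro a b hab
    have h1 : ν.real (Iic b) = ν.real (Iic a) + ν.real (Ioc a b) := by
      rw [← measureReal_union _ measurableSet_Ioc, Iic_union_Ioc_eq_Iic hab]
      rw [Set.disjoint_left]; intro x hx hx'; exact absurd hx'.1 (not_lt.2 hx)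
    have h2 : ν.real (Ioc a b) ≤ M * (b - a) := by
      have := hν (Ioc a b) measurableSet_Ioc
      rw [Real.volume_Ioc, ← ENNReal.ofReal_mul hM] at this
      exact ENNReal.toReal_le_of_le_ofReal (mul_nonneg hM (by linarith)) this
    simp only [hG]; linarith
  have hlip : LipschitzWith ⟨M, hM⟩ G := by
    apply LipschitzWith.of_dist_le_mul
    intro a b
    rw [Real.dist_eq, Real.dist_eq]
    change |G a - G b| ≤ M * |a - b|
    rcases le_total a b with h | h
    · rw [abs_sub_comm, abs_of_nonneg (by linarith [hmono h]), abs_sub_comm,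
        abs_of_nonneg (by linarith)]
      exact hdiff a b h
    · rw [abs_of_nonneg (by linarith [hmono h]), abs_of_nonneg (by linarith)]
      exact hdiff b a h
  have hc := hlip.continuous
  have hG0 : ∀ x, 0 ≤ G x := fun x => measureReal_nonneg
  have hGV : ∀ x, G x ≤ V := fun x => measureReal_mono (subset_univ _)
  have hGR : G (-R) = 0 := by simp [hG, Measure.real, hR]
  have hGR' : G R = V := by
    have : ν.real (Iic R) + ν.real (Ioi R) = V := by
      rw [← compl_Iic, measureReal_add_measureReal_compl measurableSet_Iic]
    have h2 : ν.real (Ioi R) = 0 := by simp [Measure.real, hR']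
    simp only [hG]; linarith
  refine ⟨G, hlip, ?_⟩
  apply Measure.ext_of_Iic
  intro t
  rw [Measure.map_apply hc.measurable measurableSet_Iic, Measure.restrict_apply measurableSet_Iic]
  rcases lt_or_ge t 0 with ht | ht
  · have e1 : G ⁻¹' Iic t = ∅ := by
      ext x; simp; linarith [hG0 x]
    have e2 : Iic t ∩ Icc 0 V = ∅ := by
      ext x; simp; intro h1 h2; linarith
    rw [e1, e2]; simp
  rcases le_or_gt V t with hVt | hVt
  · have e1 : G ⁻¹' Iic t = univ := by
      ext x; simp; linarith [hGV x]
    have e2 : Iic t ∩ Icc 0 V = Icc 0 V := by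
      ext x; simp; intro h1 h2; linarith
    rw [e1, e2]; simp [hV]
  · have hRR : -R ≤ R := by
      by_contra h
      have := hmono (not_le.1 h).le
      rw [hGR, hGR'] at this
      linarith
    have hbdd : BddAbove (G ⁻¹' Iic t) := by
      refine ⟨R, fun x hx => ?_⟩
      by_contra h
      have := hmono (not_le.1 h).le
      have hx' : G x ≤ t := hx
      linarith
    have hne : (G ⁻¹' Iic t).Nonempty := ⟨-R, by simp [hGR, ht]⟩
    have hcl : IsClosed (G ⁻¹' Iic t) := isClosed_Iic.preimage hc
    set x' := sSup (G ⁻¹' Iic t) with hx'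
    have hmem : G x' ≤ t := hcl.csSup_mem hne hbdd
    obtain ⟨x, hx⟩ : t ∈ range G := by
      have := intermediate_value_Icc hRR hc.continuousOn
      rw [hGR, hGR'] at this
      obtain ⟨x, -, hx⟩ := this ⟨ht, hVt.le⟩
      exact ⟨x, hx⟩
    have hxx : x ≤ x' := le_csSup hbdd (by simp [hx])
    have hGx : G x' = t := le_antisymm hmem (hx ▸ hmono hxx)
    have e1 : G ⁻¹' Iic t = Iic x' := by
      ext y
      constructor
      · intro hy; exact le_csSup hbdd hy
      · intro hy; exact (hmono hy).trans hmem
    have e2 : Iic t ∩ Icc 0 V = Icc 0 t := by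
      ext x; simp; constructor
      · rintro ⟨a, b, c⟩; exact ⟨b, a⟩
      · rintro ⟨a, b⟩; exact ⟨b, a, by linarith⟩
    rw [e1, e2, Real.volume_Icc, sub_zero, ← hGx]
    simp [hG]


theorem neumann_chord {Ω : Set E2} (ho : IsOpen Ω) (hb : Bornology.IsBounded Ω)
    (hne : Ω.Nonempty) {M : ℝ} (hM0 : 0 ≤ M)
    (hM : ∀ p ∈ Ω, ∀ q ∈ Ω, p 0 = q 0 → q 1 - p 1 ≤ M) :
    nEig1 Ω ≤ (π * M / (volume Ω).toReal)^2 := by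
  have hpi := pi_pos
  have hvol : volume Ω ≠ ⊤ := hb.measure_lt_top.ne
  set V := (volume Ω).toReal with hV
  have hVpos : 0 < V := ENNReal.toReal_pos (ho.measure_pos _ hne).ne' hvol
  have : IsFiniteMeasure (volume.restrict Ω) := ⟨by simpa using hb.measure_lt_top⟩
  have hX : Measurable (fun z : E2 => z 0) := by fun_prop
  have hXc : Continuous (fun z : E2 => z 0) := by fun_prop
  set ν := (volume.restrict Ω).map (fun z : E2 => z 0) with hν
  obtain ⟨R, hR⟩ := hb.exists_norm_le
  have hco : ∀ z ∈ Ω, |z 0| ≤ R := fun z hz => (PiLp.norm_apply_le z 0).trans (hR z hz)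
  have n1 : ν (Iic (-(R+1))) = 0 := by
    rw [hν, Measure.map_apply hX measurableSet_Iic, Measure.restrict_apply (hX measurableSet_Iic)]
    convert measure_empty (μ := volume)
    ext z
    simp only [mem_inter_iff, mem_preimage, mem_Iic, mem_empty_iff_false, iff_false, not_and]
    intro h1 h2
    have := abs_le.1 (hco z h2)
    linarith
  have n2 : ν (Ioi (R+1)) = 0 := by
    rw [hν, Measure.map_apply hX measurableSet_Ioi, Measure.restrict_apply (hX measurableSet_Ioi)]
    convert measure_empty (μ := volume)
    ext z
    simp only [mem_inter_iff, mem_preimage, mem_Ioi, mem_empty_iff_false, iff_false, not_and]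
    intro h1 h2
    have := abs_le.1 (hco z h2)
    linarith
  obtain ⟨G, hG, hmap⟩ := transport ν hM0 (fun s hs => chord_measure ho hM hs) n1 n2
  have hreal : ν.real univ = V := by
    simp [Measure.real, hν, Measure.map_apply hX MeasurableSet.univ, hV]
  rw [hreal] at hmap
  have hGc := hG.continuous
  -- integrals of functions of G
  have tr : ∀ h : ℝ → ℝ, Continuous h → ∫ z in Ω, h (G (z 0)) = ∫ x in (0:ℝ)..V, h x := by
    intro h hh
    rw [intervalIntegral.integral_of_le hVpos.le, ← integral_Icc_eq_integral_Ioc, ← hmap,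
      integral_map hGc.aemeasurable hh.aestronglyMeasurable, hν]
    exact (integral_map (μ := volume.restrict Ω) (φ := fun z : E2 => z 0) hX.aemeasurable
      (f := fun x => h (G x)) (hh.comp hGc).aestronglyMeasurable).symm
  set c := π / V with hc
  have hc0 : 0 < c := by positivity
  have hcV : c * V = π := by rw [hc]; field_simp
  have hL0 : 0 ≤ c * M := by positivity
  have hK : LipschitzWith ⟨c * M, hL0⟩ (fun x => c * G x) := by
    apply LipschitzWith.of_dist_le_mul
    intro a b
    have := hG.dist_le_mul a b
    change dist (G a) (G b) ≤ M * dist a b at this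
    change dist (c * G a) (c * G b) ≤ c * M * dist a b
    rw [Real.dist_eq, ← mul_sub, abs_mul, abs_of_pos hc0, ← Real.dist_eq, mul_assoc]
    gcongr
  have v0 : ∫ z in Ω, cos (c * G (z 0)) = 0 := by
    rw [tr (fun x => cos (c * x)) (by fun_prop),
      intervalIntegral.integral_comp_mul_left (fun x => cos x) hc0.ne', integral_cos, hcV]
    simp
  have v1 : ∫ z in Ω, (cos (c * G (z 0)))^2 = V/2 := by
    rw [tr (fun x => (cos (c * x))^2) (by fun_prop),
      intervalIntegral.integral_comp_mul_left (fun x => (cos x)^2) hc0.ne', integral_cos_sq, hcV]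
    simp [hc]; field_simp
  have v2 : ∫ z in Ω, (sin (c * G (z 0)))^2 = V/2 := by
    rw [tr (fun x => (sin (c * x))^2) (by fun_prop),
      intervalIntegral.integral_comp_mul_left (fun x => (sin x)^2) hc0.ne', integral_sin_sq, hcV]
    simp [hc]; field_simp
  obtain ⟨k, k1, k2, k3⟩ := mollify hK
  have kc : ∀ n, Continuous (k n) := fun n => (k1 n).continuous
  have lim : ∀ h : ℝ → ℝ, Continuous h → (∀ x, |h x| ≤ 1) →
      Tendsto (fun n => ∫ z in Ω, h (k n (z 0))) atTop (nhds (∫ z in Ω, h (c * G (z 0)))) := by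
    intro h hh hh1
    apply tendsto_integral_of_dominated_convergence (fun _ => 1)
    · intro n
      exact (hh.comp ((kc n).comp hXc)).aestronglyMeasurable
    · exact integrable_const _
    · intro n; exact Eventually.of_forall fun z => hh1 _
    · exact Eventually.of_forall fun z => (hh.tendsto _).comp (k3 (z 0))
  have l0 := lim cos continuous_cos abs_cos_le_one
  have sq1 : ∀ t : ℝ, |t| ≤ 1 → |t^2| ≤ 1 := by
    intro t ht; rw [abs_pow]; exact pow_le_one₀ (abs_nonneg _) ht
  have l1 := lim (fun x => (cos x)^2) (by fun_prop) (fun x => sq1 _ (abs_cos_le_one x))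
  have l2 := lim (fun x => (sin x)^2) (by fun_prop) (fun x => sq1 _ (abs_sin_le_one x))
  rw [v0] at l0
  rw [v1] at l1
  rw [v2] at l2
  have ld := l1.sub ((l0.pow 2).div_const V)
  have ln := (l2.const_mul ((c * M)^2)).div ld (by simp; positivity)
  have hlim : (c * M)^2 * (V/2) / (V/2 - 0^2/V) = (π * M / V)^2 := by
    rw [hc]; field_simp; ring
  rw [hlim] at ln
  refine ge_of_tendsto ln ?_
  have ldp := ld.eventually_const_lt (show (0:ℝ) < V/2 - 0^2/V by simp; positivity)
  filter_upwards [ldp] with n hn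
  set a := ∫ z in Ω, cos (k n (z 0)) with ha
  set u : E2 → ℝ := fun z => cos (k n (z 0)) - a / V with hu
  have hs0 : ContDiff ℝ (⊤ : ℕ∞) (fun x : E2 => x 0) := by fun_prop
  have us : ContDiff ℝ (⊤ : ℕ∞) u :=
    (contDiff_cos.comp ((k1 n).comp hs0)).sub contDiff_const
  have hkn := kc n
  have i0 : IntegrableOn (fun z : E2 => cos (k n (z 0))) Ω := intOn_bdd (by fun_prop) hb
  have i1 : IntegrableOn (fun z : E2 => (cos (k n (z 0)))^2) Ω := intOn_bdd (by fun_prop) hb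
  have vc : ∀ t : ℝ, ∫ z in Ω, t = t * V := by
    intro t; simp [Measure.real, hV, mul_comm]
  have m0 : ∫ z in Ω, u z = 0 := by
    rw [hu, integral_sub i0 (integrable_const _), vc, ← ha]; field_simp; ring
  have m1 : ∫ z in Ω, (u z)^2 = (∫ z in Ω, (cos (k n (z 0)))^2) - a^2/V := by
    have e : ∀ z, (u z)^2 = (cos (k n (z 0)))^2 + ((-(2 * (a/V))) * cos (k n (z 0)) + (a/V)^2) := by
      intro z; simp only [hu]; ring
    simp only [e]
    rw [integral_add i1 (by exact (i0.const_mul _).add (integrable_const _)),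
      integral_add (i0.const_mul _) (integrable_const _), integral_const_mul, vc, ← ha]
    field_simp; ring
  have hder : ∀ z, ‖fderiv ℝ u z‖^2 ≤ (c * M)^2 * (sin (k n (z 0)))^2 := by
    intro z
    have hz : z = !₂[z 0, z 1] := (eta_E2 z).symm
    have hud := (us.differentiable (by simp) !₂[z 0, z 1]).hasFDerivAt
    have hkd := ((k1 n).differentiable (by simp) (z 0)).hasDerivAt
    have d1 : fderiv ℝ u z !₂[1, 0] = - sin (k n (z 0)) * deriv (k n) (z 0) := by
      have q1 := hud.comp_hasDerivAt (z 0)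
        (hasDerivAt_mk (hasDerivAt_id' (z 0)) (hasDerivAt_const (z 0) (z 1)))
      have q2 := (hkd.cos).sub_const (a / V)
      have := q1.unique (q2.congr_of_eventuallyEq (Eventually.of_forall fun t => by simp [hu]))
      rw [eta_E2] at this
      exact this
    have d2 : fderiv ℝ u z !₂[0, 1] = 0 := by
      have q1 := hud.comp_hasDerivAt (z 1)
        (hasDerivAt_mk (hasDerivAt_const (z 1) (z 0)) (hasDerivAt_id' (z 1)))
      have q2 := hasDerivAt_const (z 1) (u z)
      have := q1.unique (q2.congr_of_eventuallyEq (Eventually.of_forall fun t => by simp [hu]))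
      rw [eta_E2] at this
      exact this
    rw [opnorm_sq', d1, d2]
    have hk : (deriv (k n) (z 0))^2 ≤ (c * M)^2 := sq_le_sq' (abs_le.1 (k2 n (z 0))).1 (abs_le.1 (k2 n (z 0))).2
    have := mul_le_mul_of_nonneg_right hk (sq_nonneg (sin (k n (z 0))))
    linarith
  have m2 : ∫ z in Ω, ‖fderiv ℝ u z‖^2 ≤ (c * M)^2 * ∫ z in Ω, (sin (k n (z 0)))^2 := by
    rw [← integral_const_mul]
    apply integral_mono
    · have := us.continuous_fderiv (by simp)
      exact intOn_bdd (by fun_prop) hb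
    · exact intOn_bdd (by fun_prop) hb
    · exact hder
  refine (nEig1_le us m0 (by rw [m1]; exact hn.ne')).trans ?_
  rw [m1]
  exact div_le_div_of_nonneg_right m2 hn.le


theorem vol_square : volume {z : E2 | z 0 ∈ Icc (0:ℝ) 1 ∧ z 1 ∈ Icc (0:ℝ) 1} = 1 := by
  rw [← mp_mk.measure_preimage_emb me_mk]
  have : (fun p : ℝ × ℝ => (!₂[p.1, p.2] : E2)) ⁻¹'
      {z : E2 | z 0 ∈ Icc (0:ℝ) 1 ∧ z 1 ∈ Icc (0:ℝ) 1} = Icc (0:ℝ) 1 ×ˢ Icc (0:ℝ) 1 := by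
    rfl
  rw [this, Measure.volume_eq_prod, Measure.prod_prod]
  simp

theorem det_bound {Ω : Set E2} (hb : Bornology.IsBounded Ω) (hc : Convex ℝ Ω) {P Q R : E2}
    (hP : P ∈ Ω) (hQ : Q ∈ Ω) (hR : R ∈ Ω) :
    |(Q 0 - P 0) * (R 1 - P 1) - (Q 1 - P 1) * (R 0 - P 0)| ≤ 4 * (volume Ω).toReal := by
  let L : E2 →ₗ[ℝ] E2 :=
    { toFun := fun x => (x 0 / 2) • (Q - P) + (x 1 / 2) • (R - P)
      map_add' := by intro x y; simp only [PiLp.add_apply]; module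
      map_smul' := by intro r x; simp only [PiLp.smul_apply, smul_eq_mul, RingHom.id_apply]; module }
  have hL : ∀ x, L x = (x 0 / 2) • (Q - P) + (x 1 / 2) • (R - P) := fun x => rfl
  have hdet : LinearMap.det L =
      ((Q 0 - P 0) * (R 1 - P 1) - (Q 1 - P 1) * (R 0 - P 0)) / 4 := by
    rw [← LinearMap.det_toMatrix (EuclideanSpace.basisFun (Fin 2) ℝ).toBasis, Matrix.det_fin_two]
    simp [LinearMap.toMatrix_apply, hL]
    ring
  have hsub : (fun x => P + x) '' (L '' {z : E2 | z 0 ∈ Icc (0:ℝ) 1 ∧ z 1 ∈ Icc (0:ℝ) 1}) ⊆ Ω := by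
    rintro _ ⟨_, ⟨z, ⟨⟨h1, h2⟩, h3, h4⟩, rfl⟩, rfl⟩
    have := hc.sum_mem (t := Finset.univ) (w := ![1 - z 0/2 - z 1/2, z 0/2, z 1/2])
      (z := ![P, Q, R]) (by
        intro i _; fin_cases i <;> simp <;> linarith) (by
        simp [Fin.sum_univ_three]; ring) (by
        intro i _; fin_cases i <;> simp [hP, hQ, hR])
    simp only [Fin.sum_univ_three] at this
    convert this using 1
    simp only [hL, Matrix.cons_val_zero, Matrix.cons_val_one, Matrix.cons_val]
    module
  have hv := measure_mono (μ := volume) hsub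
  rw [image_add_left, measure_preimage_add, Measure.addHaar_image_linearMap, vol_square, mul_one,
    hdet] at hv
  have := (ENNReal.ofReal_le_iff_le_toReal hb.measure_lt_top.ne).1 hv
  rw [abs_div] at this
  norm_num at this
  linarith

theorem up_point {Ω : Set E2} (ho : IsOpen Ω) {p : E2} (hp : p ∈ Ω) :
    ∃ δ > 0, (!₂[p 0, p 1 + δ] : E2) ∈ Ω := by
  have hcont : Continuous (fun t : ℝ => (!₂[p 0, p 1 + t] : E2)) := by fun_prop
  have h0 : (fun t : ℝ => (!₂[p 0, p 1 + t] : E2)) ⁻¹' Ω ∈ nhds (0:ℝ) := by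
    apply (ho.preimage hcont).mem_nhds
    simp [eta_E2, hp]
  obtain ⟨r, hr, hsub⟩ := Metric.mem_nhds_iff.1 h0
  refine ⟨r/2, by linarith, hsub ?_⟩
  rw [Metric.mem_ball, Real.dist_eq, sub_zero, abs_of_pos (by linarith)]
  linarith

theorem coord_dist (p q : E2) (i : Fin 2) : |q i - p i| ≤ dist p q := by
  rw [dist_comm, dist_eq_norm]
  exact PiLp.norm_apply_le (q - p) i

theorem main_flat {Ω : Set E2} (ho : IsOpen Ω) (hb : Bornology.IsBounded Ω) (hc : Convex ℝ Ω)
    {A B : E2} (hA : A ∈ Ω) (hB : B ∈ Ω) (hAB : B 1 = A 1) {d : ℝ} (hd : 0 < d)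
    (hl : d / 2 ≤ B 0 - A 0) (hdd : ∀ p ∈ Ω, ∀ q ∈ Ω, dist p q ≤ d) {ε t : ℝ} (hε : 0 < ε)
    (hε1 : ε ≤ 1/2) (ht : t = min 4 (64 * (volume Ω).toReal / d^2)) :
    (volume Ω).toReal^2 * dEig1 Ω * nEig1 Ω ≤
      (1 + ε) * π^4 * (t^2 / (ε^2 * (1-ε)^2) + (1 + t^2)/(1-ε)^4) := by
  have hpi := pi_pos
  have hvol : volume Ω ≠ ⊤ := hb.measure_lt_top.ne
  set V := (volume Ω).toReal with hV
  have hVpos : 0 < V := ENNReal.toReal_pos (ho.measure_pos _ ⟨A, hA⟩).ne' hvol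
  set S : Set ℝ := {r | ∃ p ∈ Ω, ∃ q ∈ Ω, p 0 = q 0 ∧ r = q 1 - p 1} with hS
  have hSb : BddAbove S := by
    refine ⟨d, ?_⟩
    rintro r ⟨p, hp, q, hq, -, rfl⟩
    exact (le_abs_self _).trans ((coord_dist p q 1).trans (hdd p hp q hq))
  set M := sSup S with hM
  have hchord : ∀ p ∈ Ω, ∀ q ∈ Ω, p 0 = q 0 → q 1 - p 1 ≤ M := fun p hp q hq h =>
    le_csSup hSb ⟨p, hp, q, hq, h, rfl⟩
  obtain ⟨δ, hδ, hAδ⟩ := up_point ho hA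
  have hMpos : 0 < M := by
    have := hchord A hA _ hAδ (by simp)
    simp at this
    linarith
  have hneum := neumann_chord ho hb ⟨A, hA⟩ hMpos.le hchord
  obtain ⟨m, ⟨p, hp, q, hq, hpq, hm⟩, hmM⟩ := exists_lt_of_lt_csSup (s := S)
    ⟨0, A, hA, A, hA, rfl, by simp⟩ (show (1 - ε) * M < sSup S by
      rw [← hM]; have : 0 < ε * M := by positivity
      linarith)
  have hε' : 0 < 1 - ε := by linarith
  have hm0 : 0 < m := lt_trans (by positivity) hmM
  -- choose the apex
  obtain ⟨C, hC, hCA, hL⟩ : ∃ C ∈ Ω, C 1 = A 1 ∧ d / 4 ≤ |C 0 - p 0| := by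
    rcases le_total (p 0) ((A 0 + B 0)/2) with h | h
    · exact ⟨B, hB, hAB, le_trans (by linarith) (le_abs_self _)⟩
    · exact ⟨A, hA, rfl, le_trans (by linarith) (neg_le_abs _)⟩
  set L := |C 0 - p 0| with hLdef
  have hL0 : 0 < L := by linarith
  have hCp : C 0 - p 0 ≠ 0 := abs_pos.1 hL0
  set s := (C 1 - p 1) / (C 0 - p 0) with hs
  -- determinant bounds
  have D1 : m * L ≤ 4 * V := by
    have := det_bound hb hc hp hq hC
    rw [← hpq] at this
    simp only [sub_self, zero_mul, zero_sub, abs_neg, abs_mul, ← hm, abs_of_pos hm0] at this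
    exact this
  have D2 : (d/2) * |C 1 - p 1| ≤ 4 * V := by
    have := det_bound hb hc hA hB hp
    rw [hAB] at this
    simp only [sub_self, zero_mul, sub_zero, abs_mul] at this
    rw [hCA, abs_sub_comm]
    refine le_trans (mul_le_mul_of_nonneg_right ?_ (abs_nonneg _)) this
    exact hl.trans (le_abs_self _)
  have D3 : m ≤ d := hm ▸ (le_abs_self _).trans ((coord_dist p q 1).trans (hdd p hp q hq))
  have D4 : |C 1 - p 1| ≤ d := (coord_dist p C 1).trans (hdd p hp C hC)
  have hmL : m / L ≤ t := by
    rw [ht, le_min_iff]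
    constructor
    · rw [div_le_iff₀ hL0]; linarith
    · rw [div_le_div_iff₀ hL0 (by positivity)]
      have : d^2 ≤ 16 * L^2 := by nlinarith
      calc m * d^2 ≤ m * (16 * L^2) := by gcongr
        _ = (m * L) * (16 * L) := by ring
        _ ≤ (4 * V) * (16 * L) := by gcongr
        _ = _ := by ring
  have hst : |s| ≤ t := by
    rw [hs, abs_div, ← hLdef, ht, le_min_iff]
    constructor
    · rw [div_le_iff₀ hL0]; linarith
    · rw [div_le_div_iff₀ hL0 (by positivity)]
      calc |C 1 - p 1| * d^2 = (d/2 * |C 1 - p 1|) * (2 * d) := by ring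
        _ ≤ (4 * V) * (2 * (4 * L)) := by gcongr; linarith
        _ ≤ 64 * V * L := by nlinarith [mul_pos hVpos hL0]
  have ht0 : 0 ≤ t := (abs_nonneg s).trans hst
  -- the parallelogram
  have key : ∀ θ w : ℝ, 0 < θ → θ < ε → 0 < w → w < (1 - ε) * m →
      (!₂[p 0 + θ * (C 0 - p 0), w + (p 1 + θ * (C 1 - p 1))] : E2) ∈ Ω := by
    intro θ w h1 h2 h3 h4
    have hθ : 0 < 1 - θ := by linarith
    set r := w / ((1 - θ) * m) with hr
    have hr0 : 0 ≤ r := by positivity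
    have hr1 : r ≤ 1 := by
      rw [hr, div_le_one (by positivity)]
      refine h4.le.trans ?_
      gcongr
    have k1 := hc hp hq (sub_nonneg.2 hr1) hr0 (by ring)
    have k2 := hc k1 hC hθ.le h1.le (by ring)
    convert k2 using 1
    have hrm : (1 - θ) * (r * m) = w := by rw [hr]; field_simp
    have hq1 : q 1 = p 1 + m := by rw [hm]; ring
    ext i
    fin_cases i
    · simp [← hpq]; ring
    · simp [hq1]; linear_combination -hrm
  have hsC : s * (C 0 - p 0) = C 1 - p 1 := by rw [hs]; field_simp
  have hdir : dEig1 Ω ≤ (1 + ε) * ((π/(ε * L))^2 + (1 + s^2) * (π/((1 - ε) * m))^2) := by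
    rcases lt_or_gt_of_ne hCp with hneg | hpos
    · have hLe : L = -(C 0 - p 0) := abs_of_neg hneg
      have := dirichlet_par (Ω := Ω) (p 0 - ε * L) (p 0) (p 1 - s * p 0) s ((1 - ε) * m) ε
        (by have : 0 < ε * L := by positivity
            linarith) (by positivity) hε (by
          intro x w hx hw
          set θ := (x - p 0) / (C 0 - p 0) with hθ
          have e1 : θ * (C 0 - p 0) = x - p 0 := by rw [hθ]; field_simp
          have h1 : 0 < θ := div_pos_of_neg_of_neg (by linarith [hx.2]) hneg
          have h2 : θ < ε := by
            rw [hθ, div_lt_iff_of_neg hneg]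
            have := hx.1
            rw [hLe] at this; linarith
          have := key θ w h1 h2 hw.1 hw.2
          convert this using 3
          · rw [e1]; ring
          · congr 1; linear_combination θ * hsC - s * e1)
      rwa [show p 0 - (p 0 - ε * L) = ε * L by ring] at this
    · have hLe : L = C 0 - p 0 := abs_of_pos hpos
      have := dirichlet_par (Ω := Ω) (p 0) (p 0 + ε * L) (p 1 - s * p 0) s ((1 - ε) * m) ε
        (by have : 0 < ε * L := by positivity
            linarith) (by positivity) hε (by
          intro x w hx hw
          set θ := (x - p 0) / (C 0 - p 0) with hθ
          have e1 : θ * (C 0 - p 0) = x - p 0 := by rw [hθ]; field_simp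
          have h1 : 0 < θ := div_pos (by linarith [hx.1]) hpos
          have h2 : θ < ε := by
            rw [hθ, div_lt_iff₀ hpos]
            have := hx.2
            rw [hLe] at this; linarith
          have := key θ w h1 h2 hw.1 hw.2
          convert this using 3
          · rw [e1]; ring
          · congr 1; linear_combination θ * hsC - s * e1)
      rwa [show p 0 + ε * L - p 0 = ε * L by ring] at this
  have hMm : M ≤ m / (1 - ε) := by rw [le_div_iff₀ hε']; linarith
  have hn2 : nEig1 Ω ≤ (π * (m / (1 - ε)) / V)^2 := hneum.trans (by gcongr)
  have hs2 : s^2 ≤ t^2 := sq_le_sq' (abs_le.1 hst).1 (abs_le.1 hst).2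
  have hmL2 : (m/L)^2 ≤ t^2 := by gcongr
  calc V^2 * dEig1 Ω * nEig1 Ω
      ≤ V^2 * ((1 + ε) * ((π/(ε * L))^2 + (1 + s^2) * (π/((1 - ε) * m))^2)) *
        (π * (m / (1 - ε)) / V)^2 := by
        have := nEig1_nonneg Ω
        gcongr
    _ = (1 + ε) * π^4 * ((m/L)^2 / (ε^2 * (1-ε)^2) + (1 + s^2)/(1-ε)^4) := by
        field_simp
    _ ≤ _ := by gcongr


theorem diam_pos' {Ω : Set E2} (hne : Ω.Nonempty) (ho : IsOpen Ω) (hb : Bornology.IsBounded Ω) :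
    0 < Metric.diam Ω := by
  obtain ⟨p, hp⟩ := hne
  obtain ⟨δ, hδ, hq⟩ := up_point ho hp
  have h1 := Metric.dist_le_diam_of_mem hb hp hq
  have h2 := coord_dist p !₂[p 0, p 1 + δ] 1
  simp [abs_of_pos hδ] at h2
  linarith

theorem main_prop {Ω : Set E2} (hne : Ω.Nonempty) (ho : IsOpen Ω) (hb : Bornology.IsBounded Ω)
    (hc : Convex ℝ Ω) {ε t : ℝ} (hε : 0 < ε) (hε1 : ε ≤ 1/2)
    (ht : t = min 4 (64 * (volume Ω).toReal / (Metric.diam Ω)^2)) :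
    (volume Ω).toReal^2 * dEig1 Ω * nEig1 Ω ≤
      (1 + ε) * π^4 * (t^2 / (ε^2 * (1-ε)^2) + (1 + t^2)/(1-ε)^4) := by
  have hd := diam_pos' hne ho hb
  set d := Metric.diam Ω with hdd
  obtain ⟨A, hA, B, hB, hAB⟩ : ∃ A ∈ Ω, ∃ B ∈ Ω, d / 2 < dist A B := by
    by_contra! h
    have := Metric.diam_le_of_forall_dist_le (s := Ω) (by linarith : 0 ≤ d/2) h
    linarith
  set l := dist A B with hl
  have hl0 : 0 < l := by linarith
  have hl2 : l^2 = (B 0 - A 0)^2 + (B 1 - A 1)^2 := by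
    rw [hl, dist_comm, dist_eq_norm, norm_sq_E2]; simp
  set v0 := B 0 - A 0 with hv0
  set v1 := B 1 - A 1 with hv1
  let T := isoMk (v0/l) (-(v1/l)) (v1/l) (v0/l) (by field_simp; linarith)
    (by field_simp; linarith) (by ring)
  have hT : ∀ x, T x = !₂[v0/l * x 0 + -(v1/l) * x 1, v1/l * x 0 + v0/l * x 1] := fun x => rfl
  have hsymm : T.symm (B - A) = !₂[l, 0] := by
    rw [LinearIsometryEquiv.symm_apply_eq, hT]
    ext i; fin_cases i <;> simp [hv0, hv1] <;> field_simp
  have hsub : T.symm B - T.symm A = !₂[l, 0] := by rw [← map_sub]; exact hsymm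
  have g0 : (T.symm B) 0 - (T.symm A) 0 = l := by
    have := congrArg (fun z : E2 => z 0) hsub
    simpa using this
  have g1 : (T.symm B) 1 - (T.symm A) 1 = 0 := by
    have := congrArg (fun z : E2 => z 1) hsub
    simpa using this
  have hvol : volume (T ⁻¹' Ω) = volume Ω :=
    T.measurePreserving.measure_preimage_emb T.toHomeomorph.measurableEmbedding Ω
  have hdist : ∀ p ∈ T ⁻¹' Ω, ∀ q ∈ T ⁻¹' Ω, dist p q ≤ d := by
    intro p hp q hq
    rw [← T.dist_map]
    exact Metric.dist_le_diam_of_mem hb hp hq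
  have := main_flat (Ω := T ⁻¹' Ω) (ho.preimage T.continuous)
    (Metric.isBounded_iff.2 ⟨d, fun p hp q hq => hdist p hp q hq⟩)
    (hc.linear_preimage T.toLinearEquiv.toLinearMap) (A := T.symm A) (B := T.symm B)
    (by simpa using hA) (by simpa using hB) (by linarith) hd (by linarith) hdist hε hε1
    (t := t) (by rw [hvol]; exact ht)
  rwa [hvol, dEig1_iso, nEig1_iso] at this

theorem bdd_set : BddAbove { r : ℝ | ∃ Ω' : Set E2, Ω'.Nonempty ∧ IsOpen Ω' ∧
          Bornology.IsBounded Ω' ∧ Convex ℝ Ω' ∧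
          r = (volume Ω').toReal^2 * dEig1 Ω' * nEig1 Ω' } := by
  refine ⟨(1 + 1/2) * π^4 * (4^2 / ((1/2)^2 * (1-1/2)^2) + (1 + 4^2)/(1-1/2)^4), ?_⟩
  rintro r ⟨Ω', h1, h2, h3, h4, rfl⟩
  refine (main_prop h1 h2 h3 h4 (ε := 1/2) (by norm_num) le_rfl rfl).trans ?_
  set t := min 4 (64 * (volume Ω').toReal / (Metric.diam Ω')^2) with ht
  have ht4 : t ≤ 4 := min_le_left _ _
  have ht0 : 0 ≤ t := le_min (by norm_num) (by positivity)
  have : t^2 ≤ 4^2 := by gcongr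
  have hpi : 0 < π^4 := by positivity
  apply mul_le_mul_of_nonneg_left _ (by positivity)
  norm_num
  linarith

theorem limsup_part (Ω : ℕ → Set E2)
    (hne : ∀ k, (Ω k).Nonempty) (hopen : ∀ k, IsOpen (Ω k))
    (hbd : ∀ k, Bornology.IsBounded (Ω k)) (hconv : ∀ k, Convex ℝ (Ω k))
    (harea : ∀ k, (volume (Ω k)).toReal = 1)
    (hdiam : Tendsto (fun k => Metric.diam (Ω k)) atTop atTop) (η : ℝ) (hη : π^4 < η) :
    ∀ᶠ k in atTop, dEig1 (Ω k) * nEig1 (Ω k) ≤ η := by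
  -- choose epsilon
  have lim1 : Tendsto (fun ε : ℝ => (1 + ε) * π^4 * (1/(1-ε)^4)) (nhdsWithin 0 (Ioi 0))
      (nhds (π^4)) := by
    have : ContinuousAt (fun ε : ℝ => (1 + ε) * π^4 * (1/(1-ε)^4)) 0 := by
      apply ContinuousAt.mul (by fun_prop)
      apply ContinuousAt.div (by fun_prop) (by fun_prop) (by norm_num)
    have h := this.tendsto
    simp only [add_zero, sub_zero, one_mul, one_pow, div_one, mul_one] at h
    exact h.mono_left nhdsWithin_le_nhds
  have ev1 := lim1.eventually_lt_const hη
  have ev2 : ∀ᶠ ε : ℝ in nhdsWithin 0 (Ioi 0), ε ∈ Ioo (0:ℝ) (1/2) :=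
    Ioo_mem_nhdsGT (by norm_num)
  obtain ⟨ε, h1, h2, h3⟩ := (ev1.and ev2).exists
  set t : ℕ → ℝ := fun k => min 4 (64 * (volume (Ω k)).toReal / (Metric.diam (Ω k))^2) with ht
  have ht0 : Tendsto t atTop (nhds 0) := by
    have hz : Tendsto (fun k => 64 * (volume (Ω k)).toReal / (Metric.diam (Ω k))^2) atTop (nhds 0) := by
      simp only [harea, mul_one]
      exact Tendsto.div_atTop tendsto_const_nhds ((tendsto_pow_atTop (by norm_num)).comp hdiam)
    refine squeeze_zero (fun k => le_min (by norm_num) (by positivity)) (fun k => min_le_right _ _) hz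
  have lim2 : Tendsto (fun k => (1 + ε) * π^4 * ((t k)^2 / (ε^2 * (1-ε)^2) + (1 + (t k)^2)/(1-ε)^4))
      atTop (nhds ((1 + ε) * π^4 * (0^2 / (ε^2 * (1-ε)^2) + (1 + 0^2)/(1-ε)^4))) :=
    (((ht0.pow 2).div_const _).add (((ht0.pow 2).const_add 1).div_const _)).const_mul _
  have ev := lim2.eventually_lt_const (u := η) (by
    simpa using h1)
  filter_upwards [ev] with k hk
  have := main_prop (hne k) (hopen k) (hbd k) (hconv k) h2 h3.le (t := t k) rfl
  rw [harea k, one_pow, one_mul] at this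
  linarith

theorem vol_disc : (volume unitDisc).toReal = π := by
  rw [unitDisc, EuclideanSpace.volume_ball_fin_two]
  simp [pi_pos.le]

theorem disc_part : π^4 < π^2 * dEig1 unitDisc * nEig1 unitDisc := by
  have h1 := dEig1_disc
  have h2 := nEig1_disc
  have h3 := pi_lt_d2
  have h4 := pi_pos
  have h5 : (10:ℝ) ≤ dEig1 unitDisc * nEig1 unitDisc := by nlinarith
  have h6 : π^2 < 10 := by nlinarith
  calc π^4 = π^2 * π^2 := by ring
    _ < π^2 * 10 := by gcongr
    _ ≤ π^2 * (dEig1 unitDisc * nEig1 unitDisc) := by gcongr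
    _ = _ := by ring

/-- Estimate (3.7): for a sequence of unit-area bounded open convex plane sets whose diameters
tend to infinity, `limsup λ₁(Ω_k) μ₁(Ω_k) ≤ π⁴`; since `π⁴ < π² λ₁(𝔻) μ₁(𝔻) = F(𝔻)`, such a
sequence cannot be maximizing for `F(Ω) = |Ω|² λ₁(Ω) μ₁(Ω)`. -/
theorem limsup_estimate_thin_convex (Ω : ℕ → Set E2)
    (hne : ∀ k, (Ω k).Nonempty) (hopen : ∀ k, IsOpen (Ω k))
    (hbd : ∀ k, Bornology.IsBounded (Ω k)) (hconv : ∀ k, Convex ℝ (Ω k))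
    (harea : ∀ k, (volume (Ω k)).toReal = 1)
    (hdiam : Tendsto (fun k => Metric.diam (Ω k)) atTop atTop) :
    Filter.limsup (fun k => dEig1 (Ω k) * nEig1 (Ω k)) atTop ≤ π^4 ∧
    π^4 < π^2 * dEig1 unitDisc * nEig1 unitDisc ∧
    ¬ Tendsto (fun k => (volume (Ω k)).toReal^2 * dEig1 (Ω k) * nEig1 (Ω k)) atTop
        (nhds (sSup { r : ℝ | ∃ Ω' : Set E2, Ω'.Nonempty ∧ IsOpen Ω' ∧
          Bornology.IsBounded Ω' ∧ Convex ℝ Ω' ∧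
          r = (volume Ω').toReal^2 * dEig1 Ω' * nEig1 Ω' })) := by
  have hsmall := limsup_part Ω hne hopen hbd hconv harea hdiam
  have hpos : ∀ k, 0 ≤ dEig1 (Ω k) * nEig1 (Ω k) := fun k =>
    mul_nonneg (dEig1_nonneg _) (nEig1_nonneg _)
  refine ⟨?_, disc_part, ?_⟩
  · apply le_of_forall_gt_imp_ge_of_dense
    intro η hη
    exact Filter.limsup_le_of_le
      (isCoboundedUnder_le_of_le atTop hpos) (hsmall η hη)
  · intro hlim
    simp only [harea, one_pow, one_mul] at hlim
    have hle : sSup { r : ℝ | ∃ Ω' : Set E2, Ω'.Nonempty ∧ IsOpen Ω' ∧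
          Bornology.IsBounded Ω' ∧ Convex ℝ Ω' ∧
          r = (volume Ω').toReal^2 * dEig1 Ω' * nEig1 Ω' } ≤ π^4 := by
      apply le_of_forall_gt_imp_ge_of_dense
      intro η hη
      exact le_of_tendsto hlim (hsmall η hη)
    have hge := le_csSup bdd_set ⟨unitDisc, ⟨0, by simp [unitDisc]⟩, Metric.isOpen_ball,
      bdd_unitDisc, convex_ball _ _, rfl⟩
    rw [vol_disc] at hge
    linarith [disc_part]
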